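/- arXiv:1108.0945 — 4 statements merged into one kernel-verified Lean document; each statement's English description precedes it below -/
import Mathlib

section
/- Let 𝒳 be a wealth-process set. If the family of terminal values {X_T : X ∈ 𝒳} is bounded in probability, then the larger family {X_t : X ∈ 𝒳, t ∈ [0,T]} is also bounded in probability. -/
open MeasureTheory Filter Set Topology
open scoped ENNReal

noncomputable section

namespace WPS

variable {Ω : Type*}

/-- A real function is càdlàg on `[0,T]`: right-continuous on `[0,T)` and
with left limits on `(0,T]`. -/
def CadlagOn (T : ℝ) (f : ℝ → ℝ) : Prop :=
  (∀ t ∈ Set.Ico (0:ℝ) T, ContinuousWithinAt f (Set.Ici t) t) ∧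
  (∀ t ∈ Set.Ioc (0:ℝ) T, ∃ l : ℝ, Filter.Tendsto f (nhdsWithin t (Set.Iio t)) (nhds l))

variable {m0 : MeasurableSpace Ω}

/-- A nonnegative càdlàg adapted process on the time interval `[0,T]`. -/
structure IsProcess (P : Measure Ω) (ℱ : Filtration ℝ m0) (T : ℝ) (X : ℝ → Ω → ℝ) : Prop where
  adapted : ∀ t ∈ Set.Icc (0:ℝ) T, Measurable[ℱ t] (X t)
  cadlag : ∀ᵐ ω ∂P, CadlagOn T (fun t => X t ω)
  nonneg : ∀ᵐ ω ∂P, ∀ t ∈ Set.Icc (0:ℝ) T, 0 ≤ X t ω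

/-- A process is strictly positive if a.s. `inf_{t ∈ [0,T]} X_t > 0`. -/
def StrictlyPos (P : Measure Ω) (T : ℝ) (X : ℝ → Ω → ℝ) : Prop :=
  ∀ᵐ ω ∂P, 0 < ⨅ t : Set.Icc (0:ℝ) T, X t ω

/-- A wealth-process set: a set of nonnegative càdlàg adapted processes with unit
initial value, containing a strictly positive element, and fork-convex. -/
structure IsWealthProcessSet (P : Measure Ω) (ℱ : Filtration ℝ m0) (T : ℝ)
    (𝒳 : Set (ℝ → Ω → ℝ)) : Prop where
  proc : ∀ X ∈ 𝒳, IsProcess P ℱ T X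
  init_one : ∀ X ∈ 𝒳, ∀ᵐ ω ∂P, X 0 ω = 1
  exists_pos : ∃ X ∈ 𝒳, StrictlyPos P T X
  forkConvex : ∀ s ∈ Set.Icc (0:ℝ) T, ∀ X ∈ 𝒳, ∀ X' ∈ 𝒳, ∀ X'' ∈ 𝒳,
    StrictlyPos P T X' → StrictlyPos P T X'' →
    ∀ α : Ω → ℝ, Measurable[ℱ s] α → (∀ ω, α ω ∈ Set.Icc (0:ℝ) 1) →
      (fun t ω => if t < s then X t ω
        else α ω * (X s ω / X' s ω) * X' t ω
          + (1 - α ω) * (X s ω / X'' s ω) * X'' t ω) ∈ 𝒳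

/-- `ξ` is an arbitrage of the first kind for the wealth-process set `𝒳`. -/
def IsArbitrageOfFirstKind (P : Measure Ω) (T : ℝ) (𝒳 : Set (ℝ → Ω → ℝ))
    (ξ : Ω → ℝ) : Prop :=
  Measurable ξ ∧ (∀ᵐ ω ∂P, 0 ≤ ξ ω) ∧ P {ω | 0 < ξ ω} ≠ 0 ∧
    ∀ x : ℝ, 0 < x → ∃ X ∈ 𝒳, ∀ᵐ ω ∂P, ξ ω ≤ x * X T ω

/-- Condition NA₁: there is no arbitrage of the first kind. -/
def NA1 (P : Measure Ω) (T : ℝ) (𝒳 : Set (ℝ → Ω → ℝ)) : Prop :=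
  ¬ ∃ ξ : Ω → ℝ, IsArbitrageOfFirstKind P T 𝒳 ξ

/-- `Z` is a `Q`-supermartingale on `[0,T]` with respect to the filtration `ℱ`. -/
def SupermartingaleOn (Q : Measure Ω) (ℱ : Filtration ℝ m0) (T : ℝ)
    (Z : ℝ → Ω → ℝ) : Prop :=
  (∀ t ∈ Set.Icc (0:ℝ) T, Measurable[ℱ t] (Z t)) ∧
  (∀ t ∈ Set.Icc (0:ℝ) T, Integrable (Z t) Q) ∧
  ∀ s t : ℝ, 0 ≤ s → s ≤ t → t ≤ T → ∀ᵐ ω ∂Q, (Q[Z t | ℱ s]) ω ≤ Z s ω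

/-- `Z` is a `Q`-martingale on `[0,T]` with respect to the filtration `ℱ`. -/
def MartingaleOn (Q : Measure Ω) (ℱ : Filtration ℝ m0) (T : ℝ)
    (Z : ℝ → Ω → ℝ) : Prop :=
  (∀ t ∈ Set.Icc (0:ℝ) T, Measurable[ℱ t] (Z t)) ∧
  (∀ t ∈ Set.Icc (0:ℝ) T, Integrable (Z t) Q) ∧
  ∀ s t : ℝ, 0 ≤ s → s ≤ t → t ≤ T → (Q[Z t | ℱ s]) =ᵐ[Q] Z s

/-- The sequence `(Xⁿ)` of nonnegative processes Fatou-converges to `X`: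
there is a countable dense set `𝕋 ⊆ [0,T]` containing `T` such that a.s., for all
`t ∈ [0,T]`, `X_t` equals both the liminf of liminfs and the limsup of limsups of
`Xⁿ_s` as `𝕋 ∋ s ↓ t` (computed in the extended reals). -/
def FatouLim (P : Measure Ω) (T : ℝ) (Xn : ℕ → ℝ → Ω → ℝ) (X : ℝ → Ω → ℝ) : Prop :=
  ∃ 𝕋 : Set ℝ, 𝕋.Countable ∧ 𝕋 ⊆ Set.Icc (0:ℝ) T ∧ T ∈ 𝕋 ∧ Set.Icc (0:ℝ) T ⊆ closure 𝕋 ∧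
    ∀ᵐ ω ∂P, ∀ t ∈ Set.Icc (0:ℝ) T,
      ((X t ω : EReal) =
        Filter.liminf (fun s : ℝ =>
          Filter.liminf (fun n : ℕ => (Xn n s ω : EReal)) Filter.atTop)
          (nhdsWithin t (𝕋 ∩ Set.Ici t))) ∧
      ((X t ω : EReal) =
        Filter.limsup (fun s : ℝ =>
          Filter.limsup (fun n : ℕ => (Xn n s ω : EReal)) Filter.atTop)
          (nhdsWithin t (𝕋 ∩ Set.Ici t)))

/-- The Fatou-closure of `𝒳`: all nonnegative càdlàg adapted processes that are
Fatou-limits of `𝒳`-valued sequences. -/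
def FatouClosure (P : Measure Ω) (ℱ : Filtration ℝ m0) (T : ℝ)
    (𝒳 : Set (ℝ → Ω → ℝ)) : Set (ℝ → Ω → ℝ) :=
  {X | IsProcess P ℱ T X ∧
    ∃ Xn : ℕ → ℝ → Ω → ℝ, (∀ n, Xn n ∈ 𝒳) ∧ FatouLim P T Xn X}

/-- The process-polar `𝒳°` of `𝒳`. -/
def processPolar (P : Measure Ω) (ℱ : Filtration ℝ m0) (T : ℝ)
    (𝒳 : Set (ℝ → Ω → ℝ)) : Set (ℝ → Ω → ℝ) :=
  {Y | IsProcess P ℱ T Y ∧ (∀ᵐ ω ∂P, Y 0 ω ≤ 1) ∧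
    ∀ X ∈ 𝒳, SupermartingaleOn P ℱ T (fun t ω => Y t ω * X t ω)}

/-- The process-bipolar `𝒳°°` of `𝒳`. -/
def processBipolar (P : Measure Ω) (ℱ : Filtration ℝ m0) (T : ℝ)
    (𝒳 : Set (ℝ → Ω → ℝ)) : Set (ℝ → Ω → ℝ) :=
  {X | IsProcess P ℱ T X ∧ (∀ᵐ ω ∂P, X 0 ω ≤ 1) ∧
    ∀ Y ∈ processPolar P ℱ T 𝒳, SupermartingaleOn P ℱ T (fun t ω => Y t ω * X t ω)}

/-- The family `{X_t : X ∈ 𝒳, t ∈ [0,T]}` is bounded in probability. -/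
def FamilyBddInProb (P : Measure Ω) (T : ℝ) (𝒳 : Set (ℝ → Ω → ℝ)) : Prop :=
  Filter.Tendsto (fun l : ℝ => ⨆ X ∈ 𝒳, ⨆ t ∈ Set.Icc (0:ℝ) T, P {ω | l < X t ω})
    Filter.atTop (nhds 0)

/-- Uniform (on `[0,T]`) convergence in probability of `(Xⁿ)` to `X`. -/
def UnifTendstoInProb (P : Measure Ω) (T : ℝ) (Xn : ℕ → ℝ → Ω → ℝ)
    (X : ℝ → Ω → ℝ) : Prop :=
  ∀ ε : ℝ, 0 < ε →
    Filter.Tendsto (fun n => P {ω | ∃ t ∈ Set.Icc (0:ℝ) T, ε ≤ |Xn n t ω - X t ω|})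
      Filter.atTop (nhds 0)

/-- The positive part of an extended real, as an extended nonnegative real. -/
def erealPos (x : EReal) : ℝ≥0∞ := if x = ⊤ then ⊤ else ENNReal.ofReal x.toReal

/-- The utility function extended to `0` by `U(0) := lim_{x ↓ 0} U(x)` (an extended real). -/
def extUtil (U : ℝ → ℝ) (w : ℝ) : EReal :=
  if 0 < w then (U w : EReal)
  else Filter.liminf (fun x : ℝ => (U x : EReal)) (nhdsWithin 0 (Set.Ioi 0))

/-- The expected utility `E[U(W)]` as an extended real, with the convention that it
equals `−∞` whenever `E[min(0, U(W))] = −∞`. -/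
def expUtility (P : Measure Ω) (U : ℝ → ℝ) (W : Ω → ℝ) : EReal :=
  if (∫⁻ ω, erealPos (-(extUtil U (W ω))) ∂P) = ⊤ then ⊥
  else ((∫⁻ ω, erealPos (extUtil U (W ω)) ∂P : ℝ≥0∞) : EReal)
    - ((∫⁻ ω, erealPos (-(extUtil U (W ω))) ∂P : ℝ≥0∞) : EReal)

/-!
Fix a strictly positive `Y ∈ 𝒳`. For `X ∈ 𝒳` and `t ∈ [0, T]`, fork-convexity provides `Z ∈ 𝒳` that
follows `X` up to time `t` and `Y` afterwards, so that `X t = Z T * (Y t / Y T)`. The first factor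
is a terminal value. The second ranges over a family that does not depend on `X` and is bounded in
probability because a càdlàg path of `Y` is bounded. Products of nonnegative families bounded in
probability are bounded in probability.
-/

section BddInProb

variable {ι κ : Type*} {P : Measure Ω} {f : ι → Ω → ℝ} {g : κ → Ω → ℝ}

/-- Boundedness in probability of a family of real random variables. Only upper tails are measured,
as in `FamilyBddInProb`, so this is the usual notion for nonnegative families. -/
def BddInProb (P : Measure Ω) (f : ι → Ω → ℝ) : Prop :=
  Tendsto (fun l : ℝ => ⨆ i, P {ω | l < f i ω}) atTop (𝓝 0)

theorem bddInProb_iff_forall_exists_le :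
    BddInProb P f ↔ ∀ ε > 0, ∃ l : ℝ, ∀ i, P {ω | l < f i ω} ≤ ε := by
  refine ENNReal.tendsto_nhds_zero.trans (forall₂_congr fun ε _ => ?_)
  simp only [iSup_le_iff]
  refine ⟨Eventually.exists, fun ⟨l, hl⟩ => ?_⟩
  filter_upwards [eventually_ge_atTop l] with l' hll' i
  exact (measure_mono fun _ => hll'.trans_lt).trans (hl i)

theorem BddInProb.of_forall_exists_ae_le (hf : BddInProb P f) (hgf : ∀ j, ∃ i, g j ≤ᵐ[P] f i) :
    BddInProb P g := by
  rw [bddInProb_iff_forall_exists_le] at hf ⊢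
  intro ε hε
  obtain ⟨l, hl⟩ := hf ε hε
  refine ⟨l, fun j => ?_⟩
  obtain ⟨i, hji⟩ := hgf j
  exact (measure_mono_ae (hji.mono fun _ hle hlt => hlt.trans_le hle)).trans (hl i)

theorem BddInProb.mul (hf : BddInProb P f) (hg : BddInProb P g) (hg_nonneg : ∀ j, 0 ≤ᵐ[P] g j) :
    BddInProb P (fun p : ι × κ => f p.1 * g p.2) := by
  rw [bddInProb_iff_forall_exists_le] at hf hg ⊢
  intro ε hε
  obtain ⟨a, ha⟩ := hf (ε / 2) (ENNReal.half_pos hε.ne')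
  obtain ⟨b, hb⟩ := hg (ε / 2) (ENNReal.half_pos hε.ne')
  refine ⟨|a| * b, fun ⟨i, j⟩ => ?_⟩
  have tail_imp : ∀ᵐ ω ∂P, |a| * b < f i ω * g j ω → a < f i ω ∨ b < g j ω := by
    filter_upwards [hg_nonneg j] with ω (hgω : 0 ≤ g j ω)
    contrapose!
    rintro ⟨hfa, hgb⟩
    calc
      f i ω * g j ω ≤ |a| * g j ω := by gcongr; exact hfa.trans (le_abs_self a)
      _ ≤ |a| * b := by gcongr
  calc
    P {ω | |a| * b < f i ω * g j ω} ≤ P ({ω | a < f i ω} ∪ {ω | b < g j ω}) :=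
      measure_mono_ae tail_imp
    _ ≤ P {ω | a < f i ω} + P {ω | b < g j ω} := measure_union_le _ _
    _ ≤ ε / 2 + ε / 2 := add_le_add (ha i) (hb j)
    _ = ε := ENNReal.add_halves ε

-- A family failing to be bounded in probability already fails along a sequence of indices, so the
-- supremum over an uncountable `ι`, which may not be measurable, never enters.
theorem bddInProb_of_ae_bddAbove [IsFiniteMeasure P] (hf : ∀ i, Measurable (f i))
    (hbdd : ∀ᵐ ω ∂P, BddAbove (range fun i => f i ω)) : BddInProb P f := by
  rw [bddInProb_iff_forall_exists_le]
  intro ε hε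
  by_contra! hlarge
  choose i hi using fun n : ℕ => hlarge n
  have tail_tendsto : Tendsto (fun n : ℕ => P {ω | (n : ℝ) < f (i n) ω}) atTop (𝓝 (P ∅)) := by
    refine tendsto_measure_of_ae_tendsto_indicator_of_isFiniteMeasure atTop .empty
      (fun n => measurableSet_lt measurable_const (hf (i n))) ?_
    filter_upwards [hbdd] with ω ⟨C, hC⟩
    filter_upwards [eventually_ge_atTop ⌈C⌉₊] with n hn
    have hle : f (i n) ω ≤ n := (hC (mem_range_self (i n))).trans (Nat.ceil_le.1 hn)
    simpa using hle
  rw [measure_empty, ENNReal.tendsto_nhds_zero] at tail_tendsto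
  obtain ⟨n, hn⟩ := (tail_tendsto ε hε).exists
  exact (hi n).not_ge hn

end BddInProb

theorem bddAbove_image_of_isCompact_of_isBoundedUnder {α β : Type*} [TopologicalSpace α]
    [Preorder β] [IsDirectedOrder β] [Nonempty β] {s : Set α} {f : α → β} (hs : IsCompact s)
    (hf : ∀ x ∈ s, (𝓝[s] x).IsBoundedUnder (· ≤ ·) f) : BddAbove (f '' s) := by
  refine hs.induction_on (p := fun t => BddAbove (f '' t)) (by simp)
    (fun _ _ htu hu => hu.mono (image_mono htu))
    (fun _ _ ht hu => by simpa only [image_union] using ht.union hu) fun x hx => ?_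
  obtain ⟨b, hb⟩ := hf x hx
  exact ⟨{y | f y ≤ b}, hb, b, forall_mem_image.2 fun _ hy => hy⟩

section Processes

variable {P : Measure Ω} {ℱ : Filtration ℝ m0} {T : ℝ} {𝒳 : Set (ℝ → Ω → ℝ)} {X Y : ℝ → Ω → ℝ}

theorem CadlagOn.bddAbove_image_Icc {f : ℝ → ℝ} (hf : CadlagOn T f) :
    BddAbove (f '' Icc 0 T) := by
  refine bddAbove_image_of_isCompact_of_isBoundedUnder isCompact_Icc fun t ht => ?_
  have bdd_at : (pure t : Filter ℝ).IsBoundedUnder (· ≤ ·) f := ⟨f t, by simp⟩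
  have bdd_left : (𝓝[Icc 0 t] t).IsBoundedUnder (· ≤ ·) f := by
    rcases ht.1.eq_or_lt with rfl | ht0
    · simpa only [Icc_self, nhdsWithin_singleton] using bdd_at
    · obtain ⟨l, hl⟩ := hf.2 t ⟨ht0, ht.2⟩
      have : (𝓝[≤] t).IsBoundedUnder (· ≤ ·) f := by
        rw [← Iio_insert, nhdsWithin_insert, IsBoundedUnder, map_sup]
        exact isBounded_sup bdd_at hl.isBoundedUnder_le
      exact this.mono (nhdsWithin_mono t Icc_subset_Iic_self)
  have bdd_right : (𝓝[Icc t T] t).IsBoundedUnder (· ≤ ·) f := by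
    rcases ht.2.eq_or_lt with rfl | htT
    · simpa only [Icc_self, nhdsWithin_singleton] using bdd_at
    · exact (hf.1 t ⟨ht.1, htT⟩).isBoundedUnder_le.mono (nhdsWithin_mono t Icc_subset_Ici_self)
  rw [← Icc_union_Icc_eq_Icc ht.1 ht.2, nhdsWithin_union, IsBoundedUnder, map_sup]
  exact isBounded_sup bdd_left bdd_right

theorem StrictlyPos.ae_pos (hY : StrictlyPos P T Y) :
    ∀ᵐ ω ∂P, ∀ t ∈ Icc (0 : ℝ) T, 0 < Y t ω := by
  filter_upwards [hY] with ω hω t ht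
  -- The real infimum of a family unbounded below is `0` by convention.
  have hbdd : BddBelow (range fun t : Icc (0 : ℝ) T => Y t ω) := by
    by_contra hnot
    exact hω.ne' (Real.iInf_of_not_bddBelow hnot)
  exact hω.trans_le (ciInf_le hbdd ⟨t, ht⟩)

theorem StrictlyPos.ae_div_terminal_nonneg (hY : StrictlyPos P T Y) (t : Icc (0 : ℝ) T) :
    0 ≤ᵐ[P] fun ω => Y t ω / Y T ω := by
  filter_upwards [hY.ae_pos] with ω hpos
  exact div_nonneg (hpos t t.2).le (hpos T (right_mem_Icc.2 (t.2.1.trans t.2.2))).le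

theorem IsProcess.bddInProb_div_terminal [IsFiniteMeasure P] (hY : IsProcess P ℱ T Y)
    (hpos : StrictlyPos P T Y) :
    BddInProb P (fun (t : Icc (0 : ℝ) T) ω => Y t ω / Y T ω) := by
  have terminal_mem (t : Icc (0 : ℝ) T) : T ∈ Icc 0 T := right_mem_Icc.2 (t.2.1.trans t.2.2)
  have hmeas (t : ℝ) (ht : t ∈ Icc 0 T) : Measurable (Y t) := (hY.adapted t ht).mono (ℱ.le t) le_rfl
  refine bddInProb_of_ae_bddAbove
    (fun t => (hmeas t t.2).div (hmeas T (terminal_mem t))) ?_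
  filter_upwards [hY.cadlag, hpos.ae_pos] with ω hcadlag hposω
  obtain ⟨C, hC⟩ := hcadlag.bddAbove_image_Icc
  refine ⟨C / Y T ω, forall_mem_range.2 fun t => ?_⟩
  exact div_le_div_of_nonneg_right (hC (mem_image_of_mem _ t.2)) (hposω T (terminal_mem t)).le

theorem IsWealthProcessSet.exists_terminal_eq (h𝒳 : IsWealthProcessSet P ℱ T 𝒳) (hX : X ∈ 𝒳)
    (hY : Y ∈ 𝒳) (hpos : StrictlyPos P T Y) {t : ℝ} (ht : t ∈ Icc 0 T) :
    ∃ Z ∈ 𝒳, ∀ ω, Z T ω = X t ω / Y t ω * Y T ω := by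
  refine ⟨_, h𝒳.forkConvex t ht X hX Y hY Y hY hpos hpos (fun _ => 1) measurable_const
    (fun _ => ⟨zero_le_one, le_rfl⟩), fun ω => ?_⟩
  simp [ht.2.not_gt]

theorem IsWealthProcessSet.exists_ae_eq_terminal_mul_div (h𝒳 : IsWealthProcessSet P ℱ T 𝒳)
    (hX : X ∈ 𝒳) (hY : Y ∈ 𝒳) (hpos : StrictlyPos P T Y) {t : ℝ} (ht : t ∈ Icc 0 T) :
    ∃ Z ∈ 𝒳, X t =ᵐ[P] fun ω => Z T ω * (Y t ω / Y T ω) := by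
  obtain ⟨Z, hZ, hZT⟩ := h𝒳.exists_terminal_eq hX hY hpos ht
  refine ⟨Z, hZ, ?_⟩
  filter_upwards [hpos.ae_pos] with ω hposω
  have hYt : Y t ω ≠ 0 := (hposω t ht).ne'
  have hYT : Y T ω ≠ 0 := (hposω T (right_mem_Icc.2 (ht.1.trans ht.2))).ne'
  rw [hZT]
  field_simp

theorem familyBddInProb_iff_bddInProb :
    FamilyBddInProb P T 𝒳 ↔ BddInProb P (fun p : 𝒳 × Icc (0 : ℝ) T => p.1.1 p.2) := by
  simp only [FamilyBddInProb, BddInProb, iSup_prod, iSup_subtype]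

end Processes

theorem familyBddInProb_of_terminalBddInProb_general {P : Measure Ω} [IsFiniteMeasure P]
    {ℱ : Filtration ℝ m0} {T : ℝ} {𝒳 : Set (ℝ → Ω → ℝ)} (h𝒳 : IsWealthProcessSet P ℱ T 𝒳)
    (hterm : Tendsto (fun l : ℝ => ⨆ X ∈ 𝒳, P {ω | l < X T ω}) atTop (𝓝 0)) :
    FamilyBddInProb P T 𝒳 := by
  obtain ⟨Y, hY, hpos⟩ := h𝒳.exists_pos
  have terminal_bdd : BddInProb P (fun X : 𝒳 => X.1 T) := by
    simpa only [BddInProb, iSup_subtype] using hterm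
  have ratio_bdd := (h𝒳.proc Y hY).bddInProb_div_terminal hpos
  have product_bdd := terminal_bdd.mul ratio_bdd hpos.ae_div_terminal_nonneg
  refine familyBddInProb_iff_bddInProb.2 (product_bdd.of_forall_exists_ae_le ?_)
  rintro ⟨⟨X, hX⟩, t⟩
  obtain ⟨Z, hZ, hXZ⟩ := h𝒳.exists_ae_eq_terminal_mul_div hX hY hpos t.2
  exact ⟨⟨⟨Z, hZ⟩, t⟩, hXZ.le⟩

theorem familyBddInProb_of_terminalBddInProb
    {Ω : Type*} {m0 : MeasurableSpace Ω} (P : Measure Ω) [IsProbabilityMeasure P]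
    (ℱ : Filtration ℝ m0) (T : ℝ) (hT : 0 < T)
    (hF_rightCont : ∀ t : ℝ, ℱ t = ⨅ s ∈ Set.Ioi t, ℱ s)
    (hF_complete : ∀ (t : ℝ) (A : Set Ω), P A = 0 → MeasurableSet[ℱ t] A)
    (𝒳 : Set (ℝ → Ω → ℝ)) (h𝒳 : IsWealthProcessSet P ℱ T 𝒳)
    (hterm : Filter.Tendsto (fun l : ℝ => ⨆ X ∈ 𝒳, P {ω | l < X T ω})
      Filter.atTop (nhds 0)) :
    FamilyBddInProb P T 𝒳 := by
  exact familyBddInProb_of_terminalBddInProb_general h𝒳 hterm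

end WPS
end
end

section
/- Let 𝒳 be a wealth-process set such that condition NA1 holds, let Q be a probability measure equivalent to P, and let X̂ be a strictly positive process with X̂_0 ≥ 1 that is the Fatou-limit of some 𝒳-valued sequence and such that X/X̂ is a Q-supermartingale for every X ∈ 𝒳. Then there exists an 𝒳-valued sequence (X^n) converging to X̂ uniformly on [0,T] in probability: sup_{t∈[0,T]} |X^n_t − X̂_t| → 0 in P-probability as n → ∞. -/
open MeasureTheory Filter Set Topology
open scoped ENNReal

noncomputable section

namespace WPS

variable {Ω : Type*}

variable {m0 : MeasurableSpace Ω}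

/-!
The Fatou-approximating sequence `Xⁿ` itself converges uniformly. Each `Wⁿ = Xⁿ / X̂ - 1` is a
`Q`-supermartingale with `Wⁿ_0 ≤ 0`. Stopping such a `W` when `|W|` first reaches `c`, and using
`|W| = W + 2 W⁻` together with the fact that `W⁻` is a submartingale, gives
`c Q(sup |W| > c) ≤ E[W_0] + 2 E[W_T⁻]`. Since `Wⁿ ≥ -1` and `Wⁿ_T → 0`, the right-hand side is
asymptotically nonpositive by dominated convergence, so `Xⁿ / X̂ → 1` uniformly in probability, and
multiplying by the pathwise bounded process `X̂` gives the claim.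
-/

section DiscreteTime

variable {μ : Measure Ω} {𝒢 : Filtration ℕ m0} {f : ℕ → Ω → ℝ}

theorem integral_abs_stoppedValue_le_of_supermartingale [IsFiniteMeasure μ]
    (hf : Supermartingale f 𝒢 μ) {σ : Ω → ℕ∞} (hσ : IsStoppingTime 𝒢 σ) {n : ℕ}
    (hσn : ∀ ω, σ ω ≤ n) :
    ∫ ω, |stoppedValue f σ ω| ∂μ ≤ ∫ ω, f 0 ω ∂μ + 2 * ∫ ω, (f n ω)⁻ ∂μ := by
  have hneg : Submartingale (-f)⁺ 𝒢 μ := hf.neg.pos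
  have hintegrable : Integrable (stoppedValue f σ) μ :=
    integrable_stoppedValue ℕ hσ hf.integrable hσn
  have hintegrable_neg : Integrable (fun ω ↦ (stoppedValue f σ ω)⁻) μ :=
    hintegrable.neg_part
  have habs (x : ℝ) : |x| = x + 2 * x⁻ := by
    linarith [posPart_add_negPart x, posPart_sub_negPart x]
  have hstart : ∫ ω, stoppedValue f σ ω ∂μ ≤ ∫ ω, f 0 ω ∂μ := by
    have hmono := hf.neg.expected_stoppedValue_mono (isStoppingTime_const 𝒢 0) hσ
      (fun _ ↦ zero_le) hσn
    simpa [stoppedValue, integral_neg] using hmono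
  have hend : ∫ ω, (stoppedValue f σ ω)⁻ ∂μ ≤ ∫ ω, (f n ω)⁻ ∂μ :=
    hneg.expected_stoppedValue_mono hσ (isStoppingTime_const 𝒢 n) hσn fun _ ↦ le_rfl
  simp only [habs]
  rw [integral_add hintegrable (hintegrable_neg.const_mul 2), integral_const_mul]
  linarith

theorem measure_exists_le_abs_le_of_supermartingale [IsFiniteMeasure μ]
    (hf : Supermartingale f 𝒢 μ) {c : ℝ} (hc : 0 < c) (n : ℕ) :
    μ {ω | ∃ k ≤ n, c ≤ |f k ω|} ≤
      ENNReal.ofReal ((∫ ω, f 0 ω ∂μ + 2 * ∫ ω, (f n ω)⁻ ∂μ) / c) := by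
  set σ : Ω → ℕ∞ := fun ω ↦ (hittingBtwn f {x | c ≤ |x|} 0 n ω : ℕ)
  have hσ : IsStoppingTime 𝒢 σ := hf.stronglyAdapted.adapted.isStoppingTime_hittingBtwn
    (measurableSet_le measurable_const measurable_norm)
  have hσn : ∀ ω, σ ω ≤ n := fun ω ↦ Nat.cast_le.2 (hittingBtwn_le (u := f) ω)
  have hhit : {ω | ∃ k ≤ n, c ≤ |f k ω|} ⊆ {ω | c ≤ |stoppedValue f σ ω|} := by
    rintro ω ⟨k, hkn, hk⟩
    exact stoppedValue_hittingBtwn_mem (s := {x | c ≤ |x|}) ⟨k, ⟨k.zero_le, hkn⟩, hk⟩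
  have hmarkov := mul_meas_ge_le_integral_of_nonneg
    (ae_of_all μ fun ω ↦ abs_nonneg (stoppedValue f σ ω))
    (integrable_stoppedValue ℕ hσ hf.integrable hσn).abs c
  rw [← ofReal_measureReal]
  refine ENNReal.ofReal_le_ofReal ((le_div_iff₀' hc).2 ?_)
  calc c * μ.real {ω | ∃ k ≤ n, c ≤ |f k ω|}
      ≤ c * μ.real {ω | c ≤ |stoppedValue f σ ω|} := by gcongr; simp
    _ ≤ ∫ ω, |stoppedValue f σ ω| ∂μ := hmarkov
    _ ≤ _ := integral_abs_stoppedValue_le_of_supermartingale hf hσ hσn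

end DiscreteTime

section Grid

variable {E : Type*} [TopologicalSpace E] {T : ℝ}

/-- Right-continuity of a path on `[0, T]`, expressed relative to `[t, T]` so that the condition
at `t = T` is automatic. -/
def RightContOn (T : ℝ) (f : ℝ → E) : Prop :=
  ∀ t ∈ Icc 0 T, ContinuousWithinAt f (Icc t T) t

theorem CadlagOn.rightContOn {f : ℝ → ℝ} (hf : CadlagOn T f) : RightContOn T f := by
  intro t ht
  rcases ht.2.eq_or_lt with rfl | htT
  · simp
  · exact (hf.1 t ⟨ht.1, htT⟩).mono Icc_subset_Ici_self

/-- The `k`-th point of the time grid with mesh `1 / n`, truncated at `T` so that every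
index gives a time in `[0, T]`. For `n = 0` the grid consists of `0` only, as `k / 0 = 0`. -/
def gridPoint (T : ℝ) (n k : ℕ) : ℝ :=
  min (k / n) T

theorem monotone_gridPoint (T : ℝ) (n : ℕ) : Monotone (gridPoint T n) := fun j k hjk ↦ by
  unfold gridPoint
  gcongr

theorem gridPoint_mem_Icc (hT : 0 ≤ T) (n k : ℕ) : gridPoint T n k ∈ Icc 0 T :=
  ⟨le_min (by positivity) hT, min_le_right _ _⟩

theorem gridPoint_zero (hT : 0 ≤ T) (n : ℕ) : gridPoint T n 0 = 0 := by
  simp [gridPoint, hT]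

theorem le_gridPoint_ceil {t : ℝ} (htT : t ≤ T) {n : ℕ} (hn : 0 < n) :
    t ≤ gridPoint T n ⌈t * n⌉₊ :=
  le_min ((le_div_iff₀ (by positivity)).2 (Nat.le_ceil _)) htT

theorem gridPoint_ceil_self {n : ℕ} (hn : 0 < n) : gridPoint T n ⌈T * n⌉₊ = T :=
  (min_le_right _ _).antisymm (le_gridPoint_ceil le_rfl hn)

theorem tendsto_gridPoint_ceil {t : ℝ} (ht : t ∈ Icc 0 T) :
    Tendsto (fun n : ℕ ↦ gridPoint T n ⌈t * n⌉₊) atTop (𝓝[Icc t T] t) := by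
  refine tendsto_nhdsWithin_iff.2 ⟨?_, ?_⟩
  · have := ((tendsto_nat_ceil_mul_div_atTop ht.1).comp tendsto_natCast_atTop_atTop).min
      (tendsto_const_nhds (x := T))
    rwa [min_eq_left ht.2] at this
  · filter_upwards [eventually_gt_atTop 0] with n hn
    exact ⟨le_gridPoint_ceil ht.2 hn, min_le_right _ _⟩

theorem RightContOn.eventually_exists_gridPoint_mem {f : ℝ → E} (hf : RightContOn T f)
    {V : Set E} (hV : IsOpen V) {t : ℝ} (ht : t ∈ Icc 0 T) (htV : f t ∈ V) :
    ∀ᶠ n : ℕ in atTop, ∃ k ≤ ⌈T * n⌉₊, f (gridPoint T n k) ∈ V := by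
  filter_upwards [(hf t ht).tendsto.comp (tendsto_gridPoint_ceil ht) (hV.mem_nhds htV)] with n hn
  exact ⟨⌈t * n⌉₊, by gcongr; exact ht.2, hn⟩

variable {μ : Measure Ω} {X : ℝ → Ω → E} {V : Set E}

theorem measure_exists_mem_le_of_eventually_grid (hX : ∀ᵐ ω ∂μ, RightContOn T fun t ↦ X t ω)
    (hV : IsOpen V) {C : ℝ≥0∞}
    (hC : ∀ᶠ n : ℕ in atTop, μ {ω | ∃ k ≤ ⌈T * n⌉₊, X (gridPoint T n k) ω ∈ V} ≤ C) :
    μ {ω | ∃ t ∈ Icc 0 T, X t ω ∈ V} ≤ C := by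
  set E : ℕ → Set Ω := fun n ↦ {ω | ∃ k ≤ ⌈T * n⌉₊, X (gridPoint T n k) ω ∈ V}
  have hmono : Monotone fun N ↦ ⋂ n ≥ N, E n := fun M N hMN ↦
    biInter_mono (fun n hn ↦ hMN.trans hn) fun _ _ ↦ Subset.rfl
  calc μ {ω | ∃ t ∈ Icc 0 T, X t ω ∈ V}
      ≤ μ (⋃ N, ⋂ n ≥ N, E n) := by
        refine measure_mono_ae ?_
        filter_upwards [hX] with ω hω ⟨t, ht, htV⟩
        obtain ⟨N, hN⟩ := eventually_atTop.1 (hω.eventually_exists_gridPoint_mem hV ht htV)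
        exact mem_iUnion.2 ⟨N, mem_iInter₂.2 hN⟩
    _ = ⨆ N, μ (⋂ n ≥ N, E n) := hmono.measure_iUnion
    _ ≤ C := iSup_le fun N ↦ by
        obtain ⟨n, hn, hNn⟩ := (hC.and (eventually_ge_atTop N)).exists
        exact (measure_mono (biInter_subset_of_mem hNn)).trans hn

theorem nullMeasurableSet_exists_mem [MeasurableSpace E] [OpensMeasurableSpace E] (hT : 0 ≤ T)
    (hmeas : ∀ t ∈ Icc 0 T, AEMeasurable (X t) μ)
    (hX : ∀ᵐ ω ∂μ, RightContOn T fun t ↦ X t ω) (hV : IsOpen V) :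
    NullMeasurableSet {ω | ∃ t ∈ Icc 0 T, X t ω ∈ V} μ := by
  have hgrid : NullMeasurableSet (⋃ n, ⋃ k, X (gridPoint T n k) ⁻¹' V) μ :=
    .iUnion fun n ↦ .iUnion fun k ↦
      (hmeas _ (gridPoint_mem_Icc hT n k)).nullMeasurable hV.measurableSet
  refine hgrid.congr ?_
  filter_upwards [hX] with ω hω
  refine propext ⟨fun hmem ↦ ?_, fun ⟨t, ht, htV⟩ ↦ ?_⟩
  · obtain ⟨n, k, hnk⟩ := mem_iUnion₂.1 hmem
    exact ⟨_, gridPoint_mem_Icc hT n k, hnk⟩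
  · obtain ⟨n, k, -, hnk⟩ := (hω.eventually_exists_gridPoint_mem hV ht htV).exists
    exact mem_iUnion₂.2 ⟨n, k, hnk⟩

end Grid

section ContinuousTime

variable {Q : Measure Ω} {ℱ : Filtration ℝ m0} {T : ℝ} {Z : ℝ → Ω → ℝ}

/-- The filtration `ℱ` observed along a monotone family of times. -/
def sampledFiltration {ι κ : Type*} [Preorder ι] [Preorder κ] (ℱ : Filtration κ m0) {τ : ι → κ}
    (hτ : Monotone τ) : Filtration ι m0 where
  seq i := ℱ (τ i)
  mono' _ _ hij := ℱ.mono (hτ hij)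
  le' i := ℱ.le (τ i)

theorem SupermartingaleOn.supermartingale_comp {ι : Type*} [Preorder ι]
    (hZ : SupermartingaleOn Q ℱ T Z) {τ : ι → ℝ} (hτ : Monotone τ) (hmem : ∀ i, τ i ∈ Icc 0 T) :
    Supermartingale (fun i ↦ Z (τ i)) (sampledFiltration ℱ hτ) Q :=
  ⟨fun i ↦ (hZ.1 _ (hmem i)).stronglyMeasurable,
    fun i j hij ↦ hZ.2.2 _ _ (hmem i).1 (hτ hij) (hmem j).2, fun i ↦ hZ.2.1 _ (hmem i)⟩

theorem SupermartingaleOn.sub_const [IsFiniteMeasure Q] (hZ : SupermartingaleOn Q ℱ T Z) (a : ℝ) :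
    SupermartingaleOn Q ℱ T fun t ω ↦ Z t ω - a := by
  refine ⟨fun t ht ↦ (hZ.1 t ht).sub_const a,
    fun t ht ↦ (hZ.2.1 t ht).sub (integrable_const a), fun s t hs hst htT ↦ ?_⟩
  filter_upwards [hZ.2.2 s t hs hst htT,
    condExp_sub (hZ.2.1 t ⟨hs.trans hst, htT⟩) (integrable_const a) (ℱ s)] with ω hle hsub
  have hconst : Q[fun _ : Ω ↦ a | ℱ s] ω = a := by rw [condExp_const (ℱ.le s)]
  calc Q[fun ω ↦ Z t ω - a | ℱ s] ω = Q[Z t | ℱ s] ω - Q[fun _ : Ω ↦ a | ℱ s] ω := hsub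
    _ ≤ Z s ω - a := by rw [hconst]; gcongr

theorem SupermartingaleOn.measure_exists_lt_abs_le [IsFiniteMeasure Q] (hT : 0 ≤ T)
    (hZ : SupermartingaleOn Q ℱ T Z) (hcont : ∀ᵐ ω ∂Q, RightContOn T fun t ↦ Z t ω)
    {c : ℝ} (hc : 0 < c) :
    Q {ω | ∃ t ∈ Icc 0 T, c < |Z t ω|} ≤
      ENNReal.ofReal ((∫ ω, Z 0 ω ∂Q + 2 * ∫ ω, (Z T ω)⁻ ∂Q) / c) := by
  refine measure_exists_mem_le_of_eventually_grid hcont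
    (V := {x | c < |x|}) (isOpen_lt continuous_const continuous_abs) ?_
  filter_upwards [eventually_gt_atTop 0] with n hn
  have hdoob := measure_exists_le_abs_le_of_supermartingale
    (hZ.supermartingale_comp (monotone_gridPoint T n) (gridPoint_mem_Icc hT n)) hc ⌈T * n⌉₊
  rw [gridPoint_zero hT, gridPoint_ceil_self hn] at hdoob
  refine le_trans (measure_mono ?_) hdoob
  rintro ω ⟨k, hk, hlt⟩
  exact ⟨k, hk, le_of_lt hlt⟩

end ContinuousTime

section TerminalConvergence

variable {Q : Measure Ω} [IsFiniteMeasure Q] {ℱ : Filtration ℝ m0} {T : ℝ}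

theorem tendsto_integral_negPart_of_tendsto_ae {W : ℕ → Ω → ℝ}
    (hmeas : ∀ n, AEStronglyMeasurable (W n) Q) {b : ℝ} (hlower : ∀ n, ∀ᵐ ω ∂Q, -b ≤ W n ω)
    (hlim : ∀ᵐ ω ∂Q, Tendsto (fun n ↦ W n ω) atTop (𝓝 0)) :
    Tendsto (fun n ↦ ∫ ω, (W n ω)⁻ ∂Q) atTop (𝓝 0) := by
  have hcont : Continuous fun x : ℝ ↦ x⁻ := continuous_neg.max continuous_const
  suffices Tendsto (fun n ↦ ∫ ω, (W n ω)⁻ ∂Q) atTop (𝓝 (∫ _, (0 : ℝ) ∂Q)) by simpa using this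
  refine tendsto_integral_of_dominated_convergence (fun _ ↦ |b|)
    (fun n ↦ hcont.comp_aestronglyMeasurable (hmeas n)) (integrable_const _) (fun n ↦ ?_) ?_
  · filter_upwards [hlower n] with ω hω
    rw [Real.norm_of_nonneg (negPart_nonneg _)]
    exact sup_le ((neg_le.1 hω).trans (le_abs_self b)) (abs_nonneg b)
  · filter_upwards [hlim] with ω hω
    simpa [Function.comp_def] using (hcont.tendsto 0).comp hω

theorem unifTendstoInProb_one_of_supermartingaleOn (hT : 0 ≤ T) {Z : ℕ → ℝ → Ω → ℝ}
    (hZ : ∀ n, SupermartingaleOn Q ℱ T (Z n))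
    (hcont : ∀ n, ∀ᵐ ω ∂Q, RightContOn T fun t ↦ Z n t ω)
    (hinit : ∀ n, ∀ᵐ ω ∂Q, Z n 0 ω ≤ 1) (hnonneg : ∀ n, ∀ᵐ ω ∂Q, 0 ≤ Z n T ω)
    (hterm : ∀ᵐ ω ∂Q, Tendsto (fun n ↦ Z n T ω) atTop (𝓝 1)) :
    UnifTendstoInProb Q T Z fun _ _ ↦ 1 := by
  intro ε hε
  have hshift n : SupermartingaleOn Q ℱ T fun t ω ↦ Z n t ω - 1 := (hZ n).sub_const 1
  have hdefect : Tendsto (fun n ↦ ∫ ω, (Z n T ω - 1)⁻ ∂Q) atTop (𝓝 0) := by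
    refine tendsto_integral_negPart_of_tendsto_ae (b := 1)
      (fun n ↦ ((hshift n).2.1 T (right_mem_Icc.2 hT)).aestronglyMeasurable) (fun n ↦ ?_) ?_
    · filter_upwards [hnonneg n] with ω hω using by linarith
    · filter_upwards [hterm] with ω hω using by simpa using hω.sub_const 1
  have hbound : Tendsto (fun n ↦ ENNReal.ofReal ((2 * ∫ ω, (Z n T ω - 1)⁻ ∂Q) / (ε / 2)))
      atTop (𝓝 0) := by
    simpa using ENNReal.tendsto_ofReal ((hdefect.const_mul 2).div_const (ε / 2))
  refine tendsto_of_tendsto_of_tendsto_of_le_of_le tendsto_const_nhds hbound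
    (fun _ ↦ zero_le) fun n ↦ ?_
  have hstart : ∫ ω, (Z n 0 ω - 1) ∂Q ≤ 0 :=
    integral_nonpos_of_ae (by filter_upwards [hinit n] with ω hω using by simpa using hω)
  have hpath : ∀ᵐ ω ∂Q, RightContOn T fun t ↦ Z n t ω - 1 := by
    filter_upwards [hcont n] with ω hω t ht using (hω t ht).sub_const 1
  calc Q {ω | ∃ t ∈ Icc 0 T, ε ≤ |Z n t ω - 1|}
      ≤ Q {ω | ∃ t ∈ Icc 0 T, ε / 2 < |Z n t ω - 1|} :=
        measure_mono fun ω ⟨t, ht, hle⟩ ↦ ⟨t, ht, (half_lt_self hε).trans_le hle⟩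
    _ ≤ _ := (hshift n).measure_exists_lt_abs_le hT hpath (half_pos hε)
    _ ≤ _ := by gcongr; linarith

end TerminalConvergence

section UniformConvergence

variable {P Q : Measure Ω} {T : ℝ}

theorem tendsto_measure_zero_of_absolutelyContinuous {ι : Type*} {l : Filter ι}
    [IsFiniteMeasure P] [SigmaFinite Q] (hPQ : P ≪ Q) {s : ι → Set Ω}
    (hs : Tendsto (fun i ↦ Q (s i)) l (𝓝 0)) : Tendsto (fun i ↦ P (s i)) l (𝓝 0) := by
  have hdensity : Tendsto (fun i ↦ ∫⁻ ω in toMeasurable Q (s i), P.rnDeriv Q ω ∂Q) l (𝓝 0) :=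
    tendsto_setLIntegral_zero (Measure.lintegral_rnDeriv_lt_top P Q).ne
      (hs.congr fun i ↦ (measure_toMeasurable (s i)).symm)
  refine tendsto_of_tendsto_of_tendsto_of_le_of_le tendsto_const_nhds hdensity
    (fun _ ↦ zero_le) fun i ↦ ?_
  calc P (s i) ≤ P (toMeasurable Q (s i)) := measure_mono (subset_toMeasurable Q (s i))
    _ = ∫⁻ ω in toMeasurable Q (s i), P.rnDeriv Q ω ∂Q :=
      (Measure.setLIntegral_rnDeriv hPQ _).symm

theorem UnifTendstoInProb.congr_ae {X X' : ℕ → ℝ → Ω → ℝ} {Y Y' : ℝ → Ω → ℝ}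
    (hX : UnifTendstoInProb P T X Y)
    (hXX' : ∀ n, ∀ᵐ ω ∂P, ∀ t ∈ Icc 0 T, X n t ω = X' n t ω)
    (hYY' : ∀ᵐ ω ∂P, ∀ t ∈ Icc 0 T, Y t ω = Y' t ω) : UnifTendstoInProb P T X' Y' := by
  refine fun ε hε ↦ (hX ε hε).congr fun n ↦ measure_congr ?_
  filter_upwards [hXX' n, hYY'] with ω hω hω'
  refine propext (exists_congr fun t ↦ and_congr_right fun ht ↦ ?_)
  rw [hω t ht, hω' t ht]

theorem CadlagOn.isBounded_image {f : ℝ → ℝ} (hf : CadlagOn T f) :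
    Bornology.IsBounded (f '' Icc 0 T) := by
  refine isCompact_Icc.induction_on (p := fun s ↦ Bornology.IsBounded (f '' s)) (by simp)
    (fun s t hst ht ↦ ht.subset (image_mono hst))
    (fun s t hs ht ↦ by rw [image_union]; exact hs.union ht) fun t ht ↦ ?_
  obtain ⟨r, hr, hr_bdd⟩ := Metric.exists_isBounded_image_of_tendsto (hf.rightContOn t ht).tendsto
  have hleft : ∃ l, Tendsto f (𝓝[Ico 0 t] t) (𝓝 l) := by
    rcases ht.1.eq_or_lt with rfl | h0t
    · simp
    · obtain ⟨l, hl⟩ := hf.2 t ⟨h0t, ht.2⟩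
      exact ⟨l, hl.mono_left (nhdsWithin_mono t Ico_subset_Iio_self)⟩
  obtain ⟨l, hl⟩ := hleft
  obtain ⟨s, hs, hs_bdd⟩ := Metric.exists_isBounded_image_of_tendsto hl
  refine ⟨s ∪ r, ?_, by rw [image_union]; exact hs_bdd.union hr_bdd⟩
  rw [← Ico_union_Icc_eq_Icc ht.1 ht.2, nhdsWithin_union]
  exact union_mem_sup hs hr

variable [IsFiniteMeasure P] {X : ℝ → Ω → ℝ}

theorem tendsto_measure_exists_lt_abs_of_cadlagOn (hT : 0 ≤ T)
    (hmeas : ∀ t ∈ Icc 0 T, AEMeasurable (X t) P) (hcadlag : ∀ᵐ ω ∂P, CadlagOn T fun t ↦ X t ω) :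
    Tendsto (fun K : ℕ ↦ P {ω | ∃ t ∈ Icc 0 T, (K : ℝ) < |X t ω|}) atTop (𝓝 0) := by
  have hnull : P (⋂ K : ℕ, {ω | ∃ t ∈ Icc 0 T, (K : ℝ) < |X t ω|}) = 0 := by
    refine measure_eq_zero_iff_ae_notMem.2 ?_
    filter_upwards [hcadlag] with ω hω hmem
    obtain ⟨C, hC⟩ := hω.isBounded_image.exists_norm_le
    obtain ⟨K, hCK⟩ := exists_nat_ge C
    obtain ⟨t, ht, hlt⟩ := mem_iInter.1 hmem K
    exact (hCK.trans_lt hlt).not_ge (hC _ (mem_image_of_mem _ ht))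
  rw [← hnull]
  refine tendsto_measure_iInter_atTop (fun K ↦ ?_) (fun K L hKL ω ⟨t, ht, hlt⟩ ↦ ?_)
    ⟨0, measure_ne_top _ _⟩
  · exact nullMeasurableSet_exists_mem hT hmeas (hcadlag.mono fun ω hω ↦ hω.rightContOn)
      (V := {x | (K : ℝ) < |x|}) (isOpen_lt continuous_const continuous_abs)
  · exact ⟨t, ht, lt_of_le_of_lt (mod_cast hKL) hlt⟩

theorem UnifTendstoInProb.mul_right (hT : 0 ≤ T) {Z : ℕ → ℝ → Ω → ℝ} {Y : ℝ → Ω → ℝ}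
    (hZ : UnifTendstoInProb P T Z Y) (hmeas : ∀ t ∈ Icc 0 T, AEMeasurable (X t) P)
    (hcadlag : ∀ᵐ ω ∂P, CadlagOn T fun t ↦ X t ω) :
    UnifTendstoInProb P T (fun n t ω ↦ Z n t ω * X t ω) fun t ω ↦ Y t ω * X t ω := by
  intro ε hε
  refine ENNReal.tendsto_nhds_zero.2 fun δ hδ ↦ ?_
  have hδ2 : 0 < δ / 2 := ENNReal.half_pos hδ.ne'
  obtain ⟨K, hK, hK0⟩ := ((ENNReal.tendsto_nhds_zero.1
    (tendsto_measure_exists_lt_abs_of_cadlagOn hT hmeas hcadlag) _ hδ2).and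
    (eventually_gt_atTop 0)).exists
  filter_upwards [ENNReal.tendsto_nhds_zero.1 (hZ (ε / K) (by positivity)) _ hδ2] with n hn
  have hsplit : {ω | ∃ t ∈ Icc 0 T, ε ≤ |Z n t ω * X t ω - Y t ω * X t ω|} ⊆
      {ω | ∃ t ∈ Icc 0 T, (K : ℝ) < |X t ω|} ∪ {ω | ∃ t ∈ Icc 0 T, ε / K ≤ |Z n t ω - Y t ω|} := by
    rintro ω ⟨t, ht, hle⟩
    refine (lt_or_ge (K : ℝ) |X t ω|).imp (fun h ↦ ⟨t, ht, h⟩) fun h ↦ ⟨t, ht, ?_⟩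
    rw [← sub_mul, abs_mul] at hle
    exact (div_le_iff₀ (by positivity)).2 (hle.trans (by gcongr))
  calc _ ≤ _ := (measure_mono hsplit).trans (measure_union_le _ _)
    _ ≤ δ / 2 + δ / 2 := add_le_add hK hn
    _ = δ := ENNReal.add_halves δ

end UniformConvergence

section Numeraire

variable {P Q : Measure Ω} {ℱ : Filtration ℝ m0} {T : ℝ}

theorem StrictlyPos.ae_forall_pos {X : ℝ → Ω → ℝ} (hX : StrictlyPos P T X) :
    ∀ᵐ ω ∂P, ∀ t ∈ Icc 0 T, 0 < X t ω := by
  filter_upwards [hX] with ω hω t ht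
  by_contra! hle
  exact hω.not_ge (Real.iInf_nonpos' ⟨⟨t, ht⟩, hle⟩)

theorem FatouLim.ae_tendsto_terminal (hT : 0 ≤ T) {X : ℕ → ℝ → Ω → ℝ} {Y : ℝ → Ω → ℝ}
    (h : FatouLim P T X Y) : ∀ᵐ ω ∂P, Tendsto (fun n ↦ X n T ω) atTop (𝓝 (Y T ω)) := by
  obtain ⟨D, -, hD, hTD, -, h⟩ := h
  have hnhds : 𝓝[D ∩ Ici T] T = pure T := by
    rw [show D ∩ Ici T = {T} from ?_, nhdsWithin_singleton]
    exact Subset.antisymm (fun t ht ↦ (hD ht.1).2.antisymm ht.2)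
      (singleton_subset_iff.2 ⟨hTD, self_mem_Ici⟩)
  filter_upwards [h] with ω hω
  obtain ⟨hinf, hsup⟩ := hω T (right_mem_Icc.2 hT)
  rw [hnhds] at hinf hsup
  rw [← EReal.tendsto_coe]
  refine tendsto_of_liminf_eq_limsup ?_ ?_
  · rw [hinf, (tendsto_pure_nhds _ T).liminf_eq]
  · rw [hsup, (tendsto_pure_nhds _ T).limsup_eq]

theorem numeraire_unif_approx_general [IsFiniteMeasure P] [IsFiniteMeasure Q] (hT : 0 ≤ T)
    (hQP : Q ≪ P) (hPQ : P ≪ Q) {X : ℕ → ℝ → Ω → ℝ} {Xhat : ℝ → Ω → ℝ}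
    (hX : ∀ n, IsProcess P ℱ T (X n)) (hXhat : IsProcess P ℱ T Xhat) (hpos : StrictlyPos P T Xhat)
    (hinit : ∀ n, ∀ᵐ ω ∂P, X n 0 ω ≤ Xhat 0 ω)
    (hterm : ∀ᵐ ω ∂P, Tendsto (fun n ↦ X n T ω) atTop (𝓝 (Xhat T ω)))
    (hnum : ∀ n, SupermartingaleOn Q ℱ T fun t ω ↦ X n t ω / Xhat t ω) :
    UnifTendstoInProb P T X Xhat := by
  have h0 : (0 : ℝ) ∈ Icc 0 T := left_mem_Icc.2 hT
  have hTT : T ∈ Icc 0 T := right_mem_Icc.2 hT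
  have hpos := hpos.ae_forall_pos
  have hratio : UnifTendstoInProb Q T (fun n t ω ↦ X n t ω / Xhat t ω) fun _ _ ↦ 1 := by
    refine unifTendstoInProb_one_of_supermartingaleOn hT hnum (fun n ↦ hQP.ae_le ?_)
      (fun n ↦ hQP.ae_le ?_) (fun n ↦ hQP.ae_le ?_) (hQP.ae_le ?_)
    · filter_upwards [hpos, (hX n).cadlag, hXhat.cadlag] with ω hpos hX hXhat t ht
      exact (hX.rightContOn t ht).div (hXhat.rightContOn t ht) (hpos t ht).ne'
    · filter_upwards [hpos, hinit n] with ω hpos hle using (div_le_one (hpos 0 h0)).2 hle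
    · filter_upwards [hpos, (hX n).nonneg] with ω hpos hnonneg
      exact div_nonneg (hnonneg T hTT) (hpos T hTT).le
    · filter_upwards [hpos, hterm] with ω hpos hlim
      simpa [(hpos T hTT).ne'] using hlim.div_const (Xhat T ω)
  have hratioP : UnifTendstoInProb P T (fun n t ω ↦ X n t ω / Xhat t ω) fun _ _ ↦ 1 :=
    fun ε hε ↦ tendsto_measure_zero_of_absolutelyContinuous hPQ (hratio ε hε)
  have hmeas : ∀ t ∈ Icc 0 T, AEMeasurable (Xhat t) P := fun t ht ↦
    ((hXhat.adapted t ht).mono (ℱ.le t) le_rfl).aemeasurable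
  refine (hratioP.mul_right hT hmeas hXhat.cadlag).congr_ae (fun n ↦ ?_) ?_
  · filter_upwards [hpos] with ω hpos t ht using div_mul_cancel₀ _ (hpos t ht).ne'
  · exact ae_of_all P fun ω t _ ↦ one_mul _

end Numeraire

theorem numeraire_unif_approx
    {Ω : Type*} {m0 : MeasurableSpace Ω} (P : Measure Ω) [IsProbabilityMeasure P]
    (ℱ : Filtration ℝ m0) (T : ℝ) (hT : 0 < T)
    (hF_rightCont : ∀ t : ℝ, ℱ t = ⨅ s ∈ Set.Ioi t, ℱ s)
    (hF_complete : ∀ (t : ℝ) (A : Set Ω), P A = 0 → MeasurableSet[ℱ t] A)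
    (𝒳 : Set (ℝ → Ω → ℝ)) (h𝒳 : IsWealthProcessSet P ℱ T 𝒳)
    (hNA1 : NA1 P T 𝒳)
    (Q : Measure Ω) [IsProbabilityMeasure Q] (hQP : Q ≪ P) (hPQ : P ≪ Q)
    (Xhat : ℝ → Ω → ℝ) (hXhat_proc : IsProcess P ℱ T Xhat)
    (hXhat_pos : StrictlyPos P T Xhat) (hXhat0 : ∀ᵐ ω ∂P, 1 ≤ Xhat 0 ω)
    (hXhat_fatou : ∃ Yn : ℕ → ℝ → Ω → ℝ, (∀ n, Yn n ∈ 𝒳) ∧ FatouLim P T Yn Xhat)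
    (hXhat_num : ∀ X ∈ 𝒳, SupermartingaleOn Q ℱ T (fun t ω => X t ω / Xhat t ω)) :
    ∃ Xn : ℕ → ℝ → Ω → ℝ, (∀ n, Xn n ∈ 𝒳) ∧ UnifTendstoInProb P T Xn Xhat := by
  obtain ⟨X, hX, hfatou⟩ := hXhat_fatou
  refine ⟨X, hX, numeraire_unif_approx_general hT.le hQP hPQ (fun n ↦ h𝒳.proc _ (hX n)) hXhat_proc
    hXhat_pos (fun n ↦ ?_) (hfatou.ae_tendsto_terminal hT.le) fun n ↦ hXhat_num _ (hX n)⟩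
  filter_upwards [hXhat0, h𝒳.init_one _ (hX n)] with ω hle hone using hone.trans_le hle

end WPS
end
end

section
/- Suppose (Z^n)_{n∈ℕ} is a sequence of nonnegative càdlàg P-supermartingales indexed by [0,T] such that Z^n_0 ≤ 1 almost surely for every n, and Z^n_T → 1 in P-probability as n → ∞. Then Z^n → 1 uniformly on [0,T] in probability: sup_{t∈[0,T]} |Z^n_t − 1| → 0 in P-probability as n → ∞. -/
open MeasureTheory Filter Set Topology
open scoped ENNReal

noncomputable section

namespace WPS

variable {Ω : Type*}

variable {m0 : MeasurableSpace Ω}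

/-!
The process `M = a - Z` is a submartingale with nonnegative means. Since `|x| = 2 x⁺ - x`, optional
stopping bounds `E|M_τ|` by `2 E[M_T⁺]` for every stopping time `τ`, and Markov's inequality at the
hitting time of `{|x| ≥ ε}` yields a two-sided maximal inequality: first along finite sets of times,
then along a countable dense set, and by right-continuity along all times. Finally
`E[(a - Z_T)⁺] → 0`, because `0 ≤ (a - Z_T)⁺ ≤ |a|` is bounded and tends to `0` in probability.
-/

section Reindex

variable {ι κ : Type*} {μ : Measure Ω} [Preorder ι] [Preorder κ]

/-- The filtration `k ↦ 𝒢 (u k)` obtained from `𝒢` by a monotone change of time `u`; it serves both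
to sample a process at finitely many times and to restrict the time set to an interval. -/
def reindexFiltration (𝒢 : Filtration ι m0) {u : κ → ι} (hu : Monotone u) : Filtration κ m0 where
  seq k := 𝒢 (u k)
  mono' _ _ h := 𝒢.mono (hu h)
  le' _ := 𝒢.le _

lemma submartingale_reindex {𝒢 : Filtration ι m0} {M : ι → Ω → ℝ} (hM : Submartingale M 𝒢 μ)
    {u : κ → ι} (hu : Monotone u) :
    Submartingale (fun k => M (u k)) (reindexFiltration 𝒢 hu) μ :=
  ⟨fun k => hM.stronglyAdapted (u k), fun _ _ h => hM.ae_le_condExp (hu h),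
    fun k => hM.integrable (u k)⟩

end Reindex

section DiscreteMaximalInequality

variable {μ : Measure Ω} {𝒢 : Filtration ℕ m0}
  {M : ℕ → Ω → ℝ}

lemma submartingale_integral_abs_stoppedValue_le [SigmaFiniteFiltration μ 𝒢]
    (hM : Submartingale M 𝒢 μ) {τ : Ω → ℕ∞} (hτ : IsStoppingTime 𝒢 τ) {n : ℕ}
    (hτn : ∀ ω, τ ω ≤ n) :
    ∫ ω, |stoppedValue M τ ω| ∂μ ≤ 2 * ∫ ω, (M n ω)⁺ ∂μ - ∫ ω, M 0 ω ∂μ := by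
  have hint : Integrable (stoppedValue M τ) μ := hM.integrable_stoppedValue hτ hτn
  have hint_pos : Integrable (fun ω => (stoppedValue M τ ω)⁺) μ := hint.pos_part
  have h_start : ∫ ω, M 0 ω ∂μ ≤ ∫ ω, stoppedValue M τ ω ∂μ :=
    hM.expected_stoppedValue_mono (isStoppingTime_const 𝒢 0) hτ (fun _ => zero_le) hτn
  have h_end : ∫ ω, (stoppedValue M τ ω)⁺ ∂μ ≤ ∫ ω, (M n ω)⁺ ∂μ :=
    hM.pos.expected_stoppedValue_mono hτ (isStoppingTime_const 𝒢 n) hτn fun _ => le_rfl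
  calc ∫ ω, |stoppedValue M τ ω| ∂μ
      = ∫ ω, (2 * (stoppedValue M τ ω)⁺ - stoppedValue M τ ω) ∂μ := by
        congr with ω
        linarith [posPart_add_negPart (stoppedValue M τ ω),
          posPart_sub_negPart (stoppedValue M τ ω)]
    _ = 2 * ∫ ω, (stoppedValue M τ ω)⁺ ∂μ - ∫ ω, stoppedValue M τ ω ∂μ := by
        rw [integral_sub (hint_pos.const_mul 2) hint, integral_const_mul]
    _ ≤ 2 * ∫ ω, (M n ω)⁺ ∂μ - ∫ ω, M 0 ω ∂μ := by linarith

lemma submartingale_mul_measureReal_exists_le_abs_le [IsFiniteMeasure μ]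
    (hM : Submartingale M 𝒢 μ) (ε : ℝ) (n : ℕ) :
    ε * μ.real {ω | ∃ k ≤ n, ε ≤ |M k ω|} ≤ 2 * ∫ ω, (M n ω)⁺ ∂μ - ∫ ω, M 0 ω ∂μ := by
  let S : Set ℝ := {x | ε ≤ |x|}
  let τ : Ω → ℕ∞ := fun ω => (hittingBtwn M S 0 n ω : ℕ)
  have hS : MeasurableSet S := measurableSet_le measurable_const measurable_id.abs
  have hτ : IsStoppingTime 𝒢 τ := hM.stronglyAdapted.adapted.isStoppingTime_hittingBtwn hS
  have hτn : ∀ ω, τ ω ≤ n := fun ω => Nat.cast_le.2 (hittingBtwn_le ω)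
  have h_event : {ω | ∃ k ≤ n, ε ≤ |M k ω|} = {ω | ε ≤ |stoppedValue M τ ω|} := by
    ext ω
    exact ⟨fun ⟨k, hkn, hk⟩ => stoppedValue_hittingBtwn_mem (s := S) ⟨k, ⟨zero_le, hkn⟩, hk⟩,
      fun h => ⟨hittingBtwn M S 0 n ω, hittingBtwn_le ω, h⟩⟩
  rw [h_event]
  exact (mul_meas_ge_le_integral_of_nonneg (ae_of_all _ fun _ => abs_nonneg _)
    (hM.integrable_stoppedValue hτ hτn).abs ε).trans
    (submartingale_integral_abs_stoppedValue_le hM hτ hτn)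

end DiscreteMaximalInequality

lemma exists_monotone_nat_image_Iic_eq {ι : Type*} [LinearOrder ι] {s : Finset ι}
    (hs : s.Nonempty) : ∃ (u : ℕ → ι) (n : ℕ), Monotone u ∧ u '' Iic n = s := by
  obtain ⟨n, hn⟩ := Nat.exists_eq_add_one.2 hs.card_pos
  refine ⟨fun k => s.orderEmbOfFin hn (Fin.clamp k n), n,
    (s.orderEmbOfFin hn).monotone.comp Fin.clamp_monotone, ?_⟩
  have h_clamp : (fun k => Fin.clamp k n) '' Iic n = univ :=
    eq_univ_of_forall fun i => ⟨i, i.is_le, Fin.ext (min_eq_left i.is_le)⟩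
  rw [← image_image (s.orderEmbOfFin hn), h_clamp, image_univ, Finset.range_orderEmbOfFin]

lemma exists_mem_dense_lt_of_continuousWithinAt_Ici {ι : Type*} [LinearOrder ι]
    [TopologicalSpace ι] [OrderTopology ι] [DenselyOrdered ι] {D : Set ι} (hD : Dense D)
    {f : ι → ℝ} {t b : ι} {c : ℝ} (htb : t < b) (hf : ContinuousWithinAt f (Ici t) t)
    (hc : c < f t) : ∃ s ∈ D, c < f s := by
  have h_near : ∀ᶠ s in 𝓝[>] t, c < f s :=
    (hf.mono Ioi_subset_Ici_self).eventually_const_lt hc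
  obtain ⟨u, htu, hu⟩ := (mem_nhdsGT_iff_exists_Ioo_subset' htb).1 h_near
  obtain ⟨s, hsD, hs⟩ := hD.exists_between htu
  exact ⟨s, hsD, hu hs⟩

section MaximalInequality

variable {ι : Type*} {μ : Measure Ω} [IsFiniteMeasure μ]
  [LinearOrder ι] {𝒢 : Filtration ι m0} {M : ι → Ω → ℝ} {b : ι} {ε : ℝ}

lemma submartingale_measure_exists_mem_finset_le_abs_le (hM : Submartingale M 𝒢 μ) (hb : IsTop b)
    (hmean : ∀ t, 0 ≤ ∫ ω, M t ω ∂μ) (hε : 0 < ε) (s : Finset ι) :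
    μ {ω | ∃ t ∈ s, ε ≤ |M t ω|} ≤ ENNReal.ofReal (2 * (∫ ω, (M b ω)⁺ ∂μ) / ε) := by
  obtain ⟨u, n, hu, hus⟩ := exists_monotone_nat_image_Iic_eq (s.insert_nonempty b)
  have hun : u n = b := by
    obtain ⟨k, hkn, rfl⟩ : b ∈ u '' Iic n := hus ▸ s.mem_insert_self b
    exact le_antisymm (hb _) (hu hkn)
  have h_sub : {ω | ∃ t ∈ s, ε ≤ |M t ω|} ⊆ {ω | ∃ k ≤ n, ε ≤ |M (u k) ω|} := by
    rintro ω ⟨t, hts, ht⟩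
    obtain ⟨k, hkn, rfl⟩ : t ∈ u '' Iic n := hus ▸ Finset.mem_insert_of_mem hts
    exact ⟨k, hkn, ht⟩
  have h_max := submartingale_mul_measureReal_exists_le_abs_le (submartingale_reindex hM hu) ε n
  rw [hun] at h_max
  calc μ {ω | ∃ t ∈ s, ε ≤ |M t ω|}
      ≤ μ {ω | ∃ k ≤ n, ε ≤ |M (u k) ω|} := measure_mono h_sub
    _ = ENNReal.ofReal (μ.real {ω | ∃ k ≤ n, ε ≤ |M (u k) ω|}) :=
        (ofReal_measureReal (measure_ne_top _ _)).symm
    _ ≤ ENNReal.ofReal (2 * (∫ ω, (M b ω)⁺ ∂μ) / ε) := by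
        refine ENNReal.ofReal_le_ofReal ((le_div_iff₀' hε).2 ?_)
        linarith [hmean (u 0)]

lemma submartingale_measure_exists_mem_countable_le_abs_le (hM : Submartingale M 𝒢 μ)
    (hb : IsTop b) (hmean : ∀ t, 0 ≤ ∫ ω, M t ω ∂μ) (hε : 0 < ε) {D : Set ι}
    (hD : D.Countable) :
    μ {ω | ∃ t ∈ D, ε ≤ |M t ω|} ≤ ENNReal.ofReal (2 * (∫ ω, (M b ω)⁺ ∂μ) / ε) := by
  have : Countable D := hD.to_subtype
  let A : Finset D → Set Ω := fun s =>
    {ω | ∃ t ∈ s.map (Function.Embedding.subtype _), ε ≤ |M t ω|}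
  have hA : Monotone A := fun s s' hss' ω ⟨t, hts, ht⟩ => ⟨t, Finset.map_subset_map.2 hss' hts, ht⟩
  have h_union : {ω | ∃ t ∈ D, ε ≤ |M t ω|} ⊆ ⋃ s, A s := fun ω ⟨t, htD, ht⟩ =>
    mem_iUnion.2 ⟨{⟨t, htD⟩}, t, by simp, ht⟩
  calc μ {ω | ∃ t ∈ D, ε ≤ |M t ω|}
      ≤ μ (⋃ s, A s) := measure_mono h_union
    _ = ⨆ s, μ (A s) := hA.directed_le.measure_iUnion
    _ ≤ ENNReal.ofReal (2 * (∫ ω, (M b ω)⁺ ∂μ) / ε) :=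
        iSup_le fun s => submartingale_measure_exists_mem_finset_le_abs_le hM hb hmean hε _

variable [TopologicalSpace ι] [OrderTopology ι] [DenselyOrdered ι]

lemma submartingale_measure_exists_lt_abs_le [TopologicalSpace.SeparableSpace ι]
    (hM : Submartingale M 𝒢 μ) (hb : IsTop b) (hmean : ∀ t, 0 ≤ ∫ ω, M t ω ∂μ)
    (hright : ∀ᵐ ω ∂μ, ∀ t < b, ContinuousWithinAt (fun s => M s ω) (Ici t) t) (hε : 0 < ε) :
    μ {ω | ∃ t, ε < |M t ω|} ≤ ENNReal.ofReal (2 * (∫ ω, (M b ω)⁺ ∂μ) / ε) := by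
  obtain ⟨D, hD_countable, hD_dense, -, hD_top⟩ := exists_countable_dense_bot_top ι
  refine le_trans (measure_mono_ae ?_)
    (submartingale_measure_exists_mem_countable_le_abs_le hM hb hmean hε hD_countable)
  filter_upwards [hright] with ω hω ⟨t, ht⟩
  rcases (hb t).eq_or_lt with rfl | htb
  · exact ⟨t, hD_top t hb, ht.le⟩
  · obtain ⟨s, hsD, hs⟩ :=
      exists_mem_dense_lt_of_continuousWithinAt_Ici hD_dense htb (hω t htb).abs ht
    exact ⟨s, hsD, hs.le⟩

end MaximalInequality

section ConvergenceInMeasure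

variable {κ E : Type*} {μ : Measure Ω} [IsFiniteMeasure μ]
  {l : Filter κ}

lemma integral_norm_le_of_norm_le [SeminormedAddCommGroup E] {f : Ω → E}
    (hf : AEStronglyMeasurable f μ) {C : ℝ} (hC : ∀ᵐ ω ∂μ, ‖f ω‖ ≤ C) {η : ℝ} (hη : 0 ≤ η) :
    ∫ ω, ‖f ω‖ ∂μ ≤ η * μ.real univ + C * μ.real {ω | η ≤ ‖f ω‖} := by
  have h_meas : NullMeasurableSet {ω | η ≤ ‖f ω‖} μ :=
    nullMeasurableSet_le aemeasurable_const hf.norm.aemeasurable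
  have h_indicator : Integrable ({ω | η ≤ ‖f ω‖}.indicator fun _ => C) μ :=
    (integrable_const C).indicator₀ h_meas
  calc ∫ ω, ‖f ω‖ ∂μ ≤ ∫ ω, (η + {ω | η ≤ ‖f ω‖}.indicator (fun _ => C) ω) ∂μ := by
        refine integral_mono_of_nonneg (ae_of_all _ fun _ => norm_nonneg _)
          ((integrable_const η).add h_indicator) ?_
        filter_upwards [hC] with ω hω
        by_cases h : η ≤ ‖f ω‖
        · simpa [h] using by linarith
        · simpa [h] using (not_le.1 h).le
    _ = η * μ.real univ + C * μ.real {ω | η ≤ ‖f ω‖} := by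
        rw [integral_add (integrable_const η) h_indicator, integral_indicator₀ h_meas]
        simp [mul_comm]

lemma tendsto_integral_norm_of_tendstoInMeasure_zero [SeminormedAddCommGroup E] {f : κ → Ω → E}
    (hf : ∀ i, AEStronglyMeasurable (f i) μ) {C : ℝ} (hC : ∀ i, ∀ᵐ ω ∂μ, ‖f i ω‖ ≤ C)
    (hlim : TendstoInMeasure μ f l fun _ => 0) :
    Tendsto (fun i => ∫ ω, ‖f i ω‖ ∂μ) l (𝓝 0) := by
  refine tendsto_order.2 ⟨fun x hx => Eventually.of_forall fun i =>
    hx.trans_le (integral_nonneg fun _ => norm_nonneg _), fun δ hδ => ?_⟩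
  obtain ⟨η, hη, hηδ⟩ : ∃ η > 0, η * μ.real univ < δ := by
    simpa [mul_comm] using exists_pos_mul_lt hδ (μ.real univ)
  have h_bound : Tendsto (fun i => η * μ.real univ + C * μ.real {ω | η ≤ ‖f i ω‖}) l
      (𝓝 (η * μ.real univ)) := by
    simpa using ((tendstoInMeasure_iff_measureReal_norm.1 hlim η hη).const_mul C).const_add
      (η * μ.real univ)
  filter_upwards [h_bound.eventually_lt_const hηδ] with i hi
  exact (integral_norm_le_of_norm_le (hf i) (hC i) hη.le).trans_lt hi

lemma tendsto_integral_posPart_const_sub {X : κ → Ω → ℝ} {a : ℝ}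
    (hX : ∀ i, AEStronglyMeasurable (X i) μ) (hX0 : ∀ i, 0 ≤ᵐ[μ] X i)
    (hlim : TendstoInMeasure μ X l fun _ => a) :
    Tendsto (fun i => ∫ ω, (a - X i ω)⁺ ∂μ) l (𝓝 0) := by
  have h_norm : ∀ x : ℝ, ‖(a - x)⁺‖ = (a - x)⁺ := fun x => Real.norm_of_nonneg (posPart_nonneg _)
  have h_meas : ∀ i, AEStronglyMeasurable (fun ω => (a - X i ω)⁺) μ := fun i =>
    (aestronglyMeasurable_const.sub (hX i)).sup aestronglyMeasurable_const
  have h_bound : ∀ i, ∀ᵐ ω ∂μ, ‖(a - X i ω)⁺‖ ≤ |a| := fun i => by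
    filter_upwards [hX0 i] with ω hω
    rw [h_norm]
    exact sup_le ((sub_le_self a hω).trans (le_abs_self a)) (abs_nonneg a)
  have h_dist : ∀ x : ℝ, dist (a - x)⁺ 0 ≤ dist x a := fun x => by
    rw [dist_zero_right, h_norm, dist_comm, Real.dist_eq]
    exact sup_le (le_abs_self _) (abs_nonneg _)
  have h_zero : TendstoInMeasure μ (fun i ω => (a - X i ω)⁺) l fun _ => 0 :=
    tendstoInMeasure_iff_dist.2 fun η hη =>
      tendsto_of_tendsto_of_tendsto_of_le_of_le tendsto_const_nhds
        (tendstoInMeasure_iff_dist.1 hlim η hη) (fun _ => zero_le)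
        fun i => measure_mono fun ω (hω : η ≤ _) => hω.trans (h_dist (X i ω))
  simpa only [h_norm] using tendsto_integral_norm_of_tendstoInMeasure_zero h_meas h_bound h_zero

end ConvergenceInMeasure

theorem supermartingale_ucp_convergence_general
    {Ω ι κ : Type*} {m0 : MeasurableSpace Ω} {P : Measure Ω} [IsProbabilityMeasure P]
    [LinearOrder ι] [TopologicalSpace ι] [OrderTopology ι] [DenselyOrdered ι]
    [TopologicalSpace.SeparableSpace ι] {𝒢 : Filtration ι m0} {b : ι} (hb : IsTop b)
    {l : Filter κ} {Z : κ → ι → Ω → ℝ} {a : ℝ}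
    (hZ : ∀ n, Supermartingale (Z n) 𝒢 P)
    (hright : ∀ n, ∀ᵐ ω ∂P, ∀ t < b, ContinuousWithinAt (fun s => Z n s ω) (Ici t) t)
    (hnonneg : ∀ n, 0 ≤ᵐ[P] Z n b)
    (hmean : ∀ n t, ∫ ω, Z n t ω ∂P ≤ a)
    (hlim : TendstoInMeasure P (fun n => Z n b) l fun _ => a) :
    ∀ ε : ℝ, 0 < ε → Tendsto (fun n => P {ω | ∃ t, ε ≤ |Z n t ω - a|}) l (𝓝 0) := by
  intro ε hε
  have hM : ∀ n, Submartingale (fun t ω => a - Z n t ω) 𝒢 P := fun n =>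
    (martingale_const 𝒢 P a).submartingale.sub_supermartingale (hZ n)
  have hM_mean : ∀ n t, 0 ≤ ∫ ω, (a - Z n t ω) ∂P := fun n t => by
    simpa [integral_sub (integrable_const a) ((hZ n).integrable t)] using hmean n t
  have hM_right : ∀ n, ∀ᵐ ω ∂P, ∀ t < b, ContinuousWithinAt (fun s => a - Z n s ω) (Ici t) t :=
    fun n => (hright n).mono fun ω hω t ht => continuousWithinAt_const.sub (hω t ht)
  have h_maximal : ∀ n, P {ω | ∃ t, ε ≤ |Z n t ω - a|} ≤
      ENNReal.ofReal (2 * (∫ ω, (a - Z n b ω)⁺ ∂P) / (ε / 2)) := fun n => by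
    have h_sub : {ω | ∃ t, ε ≤ |Z n t ω - a|} ⊆ {ω | ∃ t, ε / 2 < |a - Z n t ω|} :=
      fun ω ⟨t, ht⟩ => ⟨t, abs_sub_comm a _ ▸ (half_lt_self hε).trans_le ht⟩
    exact (measure_mono h_sub).trans
      (submartingale_measure_exists_lt_abs_le (hM n) hb (hM_mean n) (hM_right n) (half_pos hε))
  have h_integral : Tendsto (fun n => ∫ ω, (a - Z n b ω)⁺ ∂P) l (𝓝 0) :=
    tendsto_integral_posPart_const_sub (fun n => ((hZ n).integrable b).aestronglyMeasurable)
      hnonneg hlim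
  have h_bound : Tendsto
      (fun n => ENNReal.ofReal (2 * (∫ ω, (a - Z n b ω)⁺ ∂P) / (ε / 2))) l (𝓝 0) := by
    simpa using ENNReal.tendsto_ofReal ((h_integral.const_mul 2).div_const (ε / 2))
  exact tendsto_of_tendsto_of_tendsto_of_le_of_le tendsto_const_nhds h_bound
    (fun _ => zero_le) h_maximal

section Icc

variable {P : Measure Ω} {ℱ : Filtration ℝ m0} {T : ℝ}

lemma CadlagOn.continuousWithinAt_Icc {f : ℝ → ℝ} (hf : CadlagOn T f) {t : Icc 0 T} (ht : t < T) :
    ContinuousWithinAt (fun s : Icc 0 T => f s) (Ici t) t :=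
  (hf.1 t ⟨t.2.1, ht⟩).comp continuous_subtype_val.continuousWithinAt fun _ h => h

lemma SupermartingaleOn.supermartingale_Icc {Z : ℝ → Ω → ℝ} (hZ : SupermartingaleOn P ℱ T Z) :
    Supermartingale (fun t : Icc 0 T => Z t) (reindexFiltration ℱ (Subtype.mono_coe _)) P :=
  ⟨fun t => (hZ.1 t t.2).stronglyMeasurable, fun s t hst => hZ.2.2 s t s.2.1 hst t.2.2,
    fun t => hZ.2.1 t t.2⟩

lemma SupermartingaleOn.integral_le_of_ae_le [IsProbabilityMeasure P] {Z : ℝ → Ω → ℝ}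
    (hZ : SupermartingaleOn P ℱ T Z) {a : ℝ} (ha : ∀ᵐ ω ∂P, Z 0 ω ≤ a) (t : Icc 0 T) :
    ∫ ω, Z t ω ∂P ≤ a := by
  have h0 : (0 : ℝ) ∈ Icc 0 T := ⟨le_rfl, t.2.1.trans t.2.2⟩
  calc ∫ ω, Z t ω ∂P ≤ ∫ ω, Z 0 ω ∂P := by
        simpa using hZ.supermartingale_Icc.setIntegral_le (i := ⟨0, h0⟩) t.2.1 MeasurableSet.univ
    _ ≤ ∫ _, a ∂P := integral_mono_ae (hZ.2.1 0 h0) (integrable_const a) ha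
    _ = a := by simp

lemma unifTendstoInProb_iff_Icc {X : ℕ → ℝ → Ω → ℝ} {Y : ℝ → Ω → ℝ} :
    UnifTendstoInProb P T X Y ↔ ∀ ε : ℝ, 0 < ε →
      Tendsto (fun n => P {ω | ∃ t : Icc 0 T, ε ≤ |X n t ω - Y t ω|}) atTop (𝓝 0) := by
  simp only [UnifTendstoInProb, SetCoe.exists, exists_prop]

end Icc

theorem supermartingale_ucp_convergence
    {Ω : Type*} {m0 : MeasurableSpace Ω} (P : Measure Ω) [IsProbabilityMeasure P]
    (ℱ : Filtration ℝ m0) (T : ℝ) (hT : 0 < T)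
    (hF_rightCont : ∀ t : ℝ, ℱ t = ⨅ s ∈ Set.Ioi t, ℱ s)
    (hF_complete : ∀ (t : ℝ) (A : Set Ω), P A = 0 → MeasurableSet[ℱ t] A)
    (Z : ℕ → ℝ → Ω → ℝ)
    (hZ_proc : ∀ n, IsProcess P ℱ T (Z n))
    (hZ_sup : ∀ n, SupermartingaleOn P ℱ T (Z n))
    (hZ0 : ∀ n, ∀ᵐ ω ∂P, Z n 0 ω ≤ 1)
    (hZT : TendstoInMeasure P (fun n => Z n T) Filter.atTop (fun _ => (1:ℝ)))
    :
    UnifTendstoInProb P T Z (fun _ _ => (1:ℝ)) := by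
  have hT_mem : T ∈ Icc 0 T := right_mem_Icc.2 hT.le
  have hT_top : IsTop (⟨T, hT_mem⟩ : Icc 0 T) := fun t => t.2.2
  exact unifTendstoInProb_iff_Icc.2 <| supermartingale_ucp_convergence_general
    (Z := fun n (t : Icc 0 T) => Z n t) hT_top
    (fun n => (hZ_sup n).supermartingale_Icc)
    (fun n => (hZ_proc n).cadlag.mono fun _ hω _ ht => hω.continuousWithinAt_Icc ht)
    (fun n => (hZ_proc n).nonneg.mono fun _ hω => hω T hT_mem)
    (fun n => (hZ_sup n).integral_le_of_ae_le (hZ0 n)) hZT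

end WPS
end
end

section
/- Suppose (Z^n)_{n∈ℕ} is a sequence of nonnegative càdlàg P-supermartingales indexed by [0,T] such that Z^n_0 ≤ 1 almost surely for every n, and Z^n_T → 1 in P-probability as n → ∞. Then for every ε ∈ (0,∞), lim_{n→∞} P[inf_{t∈[0,T]} Z^n_t < 1 − ε] = 0. -/
open MeasureTheory Filter Set Topology
open scoped ENNReal

noncomputable section

namespace WPS

variable {Ω : Type*}

variable {m0 : MeasurableSpace Ω}

/-!
Stopping at the first time `Z < c - ε` and using the supermartingale property up to the final time
`T` gives Doob's inequality `ε P(inf Z < c - ε) ≤ E[(c - Z_T)⁺]`: for finitely many times directly,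
and for all times because right-continuous paths are determined by a countable set of times. If the
final values are uniformly bounded below and converge to `c` in measure, then `(c - Z_T)⁺` is
bounded and converges to `0` in measure, so the right-hand side tends to `0`.
-/

section Measure

variable {ι κ : Type*} {μ : Measure Ω}

lemma ofReal_integral_le_lintegral_ofReal {f : Ω → ℝ} (hf : Integrable f μ) :
    ENNReal.ofReal (∫ ω, f ω ∂μ) ≤ ∫⁻ ω, ENNReal.ofReal (f ω) ∂μ := by
  rw [integral_eq_lintegral_pos_part_sub_lintegral_neg_part hf]
  exact (ENNReal.ofReal_le_ofReal (sub_le_self _ ENNReal.toReal_nonneg)).trans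
    ENNReal.ofReal_toReal_le

lemma measure_biUnion_le_of_forall_finset {D : Set ι} (hD : D.Countable) {A : ι → Set Ω}
    {K : ℝ≥0∞} (hK : ∀ S : Finset ι, ↑S ⊆ D → μ (⋃ i ∈ S, A i) ≤ K) : μ (⋃ i ∈ D, A i) ≤ K := by
  have := hD.to_subtype
  have hmono : Monotone fun S : Finset D => ⋃ i ∈ S, A i :=
    fun _ _ hST => biUnion_subset_biUnion_left hST
  rw [biUnion_eq_iUnion, iUnion_eq_iUnion_finset, hmono.directed_le.measure_iUnion]
  refine iSup_le fun S => ?_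
  simpa using hK (S.map (.subtype _)) (by simp)

lemma lintegral_le_mul_add_mul_measure_le {g h : Ω → ℝ≥0∞} {C : ℝ≥0∞} (hgh : g ≤ᵐ[μ] h)
    (hgC : ∀ᵐ ω ∂μ, g ω ≤ C) (δ : ℝ≥0∞) :
    ∫⁻ ω, g ω ∂μ ≤ δ * μ univ + C * μ {ω | δ ≤ h ω} :=
  calc ∫⁻ ω, g ω ∂μ
      ≤ ∫⁻ ω, δ + {ω | δ ≤ h ω}.indicator (fun _ => C) ω ∂μ := by
        refine lintegral_mono_ae ?_
        filter_upwards [hgh, hgC] with ω hω hωC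
        by_cases hδ : δ ≤ h ω
        · simpa [hδ] using hωC.trans le_add_self
        · simpa [hδ] using hω.trans (not_le.mp hδ).le
    _ = δ * μ univ + ∫⁻ ω, {ω | δ ≤ h ω}.indicator (fun _ => C) ω ∂μ := by
        rw [lintegral_add_left measurable_const, lintegral_const]
    _ ≤ δ * μ univ + C * μ {ω | δ ≤ h ω} := by
        gcongr
        exact lintegral_indicator_const_le _ _

lemma tendsto_lintegral_zero_of_le_edist_of_tendstoInMeasure [IsFiniteMeasure μ] {E : Type*}
    [EDist E] {l : Filter κ} {f : κ → Ω → E} {f' : Ω → E} {g : κ → Ω → ℝ≥0∞} {C : ℝ≥0∞}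
    (hf : TendstoInMeasure μ f l f') (hgf : ∀ k, ∀ᵐ ω ∂μ, g k ω ≤ edist (f k ω) (f' ω))
    (hgC : ∀ k, ∀ᵐ ω ∂μ, g k ω ≤ C) (hC : C ≠ ∞) :
    Tendsto (fun k => ∫⁻ ω, g k ω ∂μ) l (𝓝 0) := by
  refine ENNReal.tendsto_nhds_zero.mpr fun η hη => ?_
  obtain ⟨δ, hδ, hδη⟩ := ENNReal.exists_nnreal_pos_mul_lt (measure_ne_top μ univ) hη.ne'
  have hbound : Tendsto (fun k => δ * μ univ + C * μ {ω | δ ≤ edist (f k ω) (f' ω)}) l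
      (𝓝 (δ * μ univ)) := by
    simpa using (ENNReal.Tendsto.const_mul (hf δ (by exact_mod_cast hδ)) (.inr hC)).const_add
      (δ * μ univ)
  filter_upwards [hbound.eventually (gt_mem_nhds hδη)] with k hk
  exact (lintegral_le_mul_add_mul_measure_le (hgf k) (hgC k) δ).trans hk.le

lemma tendsto_lintegral_ofReal_sub_of_tendstoInMeasure [IsFiniteMeasure μ] {l : Filter κ}
    {f : κ → Ω → ℝ} {b c : ℝ} (hb : ∀ k, ∀ᵐ ω ∂μ, b ≤ f k ω)
    (hf : TendstoInMeasure μ f l fun _ => c) :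
    Tendsto (fun k => ∫⁻ ω, ENNReal.ofReal (c - f k ω) ∂μ) l (𝓝 0) := by
  refine tendsto_lintegral_zero_of_le_edist_of_tendstoInMeasure (C := ENNReal.ofReal (c - b)) hf
    (fun k => .of_forall fun ω => ?_) (fun k => ?_) ENNReal.ofReal_ne_top
  · rw [edist_comm, edist_dist, Real.dist_eq]
    exact ENNReal.ofReal_le_ofReal (le_abs_self _)
  · filter_upwards [hb k] with ω hω
    gcongr

end Measure

lemma exists_countable_forall_mem_closure_inter_Ici (ι : Type*) [LinearOrder ι]
    [TopologicalSpace ι] [OrderTopology ι] [SecondCountableTopology ι] :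
    ∃ D : Set ι, D.Countable ∧ ∀ t, t ∈ closure (D ∩ Ici t) := by
  obtain ⟨D, hD, hdense⟩ := TopologicalSpace.exists_countable_dense ι
  refine ⟨D ∪ {t | 𝓝[>] t = ⊥}, hD.union countable_setOfPred_isolated_right, fun t => ?_⟩
  by_cases ht : 𝓝[>] t = ⊥
  · exact subset_closure ⟨.inr ht, self_mem_Ici⟩
  · have hIoi : t ∈ closure (Ioi t) := mem_closure_iff_nhdsWithin_neBot.mpr ⟨ht⟩
    have hsub : Ioi t ∩ D ⊆ (D ∪ {t | 𝓝[>] t = ⊥}) ∩ Ici t := fun s hs => ⟨.inl hs.2, hs.1.le⟩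
    exact closure_minimal ((hdense.open_subset_closure_inter isOpen_Ioi).trans (closure_mono hsub))
      isClosed_closure hIoi

section MaximalInequality

variable {ι κ : Type*} [LinearOrder ι] {μ : Measure Ω} [IsFiniteMeasure μ]
  {ℱ : Filtration ι m0} {Z : ι → Ω → ℝ} {T : ι}

lemma setIntegral_biUnion_lt_le (hZ : Supermartingale Z ℱ μ) (c : ℝ) {S : Finset ι}
    (hS : ∀ t ∈ S, t ≤ T) :
    ∫ ω in ⋃ t ∈ S, {ω | Z t ω < c}, Z T ω ∂μ ≤ c * μ.real (⋃ t ∈ S, {ω | Z t ω < c}) := by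
  have hlt (t : ι) : MeasurableSet[ℱ t] {ω | Z t ω < c} :=
    (hZ.stronglyMeasurable t).measurable measurableSet_Iio
  induction S using Finset.induction_on_max with
  | empty => simp
  | insert t S hmax ih =>
    set A : Set Ω := ⋃ s ∈ S, {ω | Z s ω < c}
    -- `D` is the event that `t` is the first of the times at which `Z < c`.
    set D : Set Ω := {ω | Z t ω < c} \ A
    have hA : MeasurableSet[ℱ t] A :=
      S.measurableSet_biUnion fun s hs => ℱ.mono (hmax s hs).le _ (hlt s)
    have hD : MeasurableSet[ℱ t] D := (hlt t).diff hA
    have hD₀ : MeasurableSet D := ℱ.le t _ hD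
    have hdisj : Disjoint A D := disjoint_sdiff_right
    have hunion : ⋃ s ∈ insert t S, {ω | Z s ω < c} = A ∪ D := by
      rw [Finset.set_biUnion_insert, union_sdiff_self, union_comm]
    have hfirst : ∫ ω in D, Z T ω ∂μ ≤ c * μ.real D :=
      calc ∫ ω in D, Z T ω ∂μ
          ≤ ∫ ω in D, Z t ω ∂μ := hZ.setIntegral_le (hS t (by simp)) hD
        _ ≤ ∫ _ in D, c ∂μ :=
            setIntegral_mono_on (hZ.integrable t).integrableOn integrableOn_const hD₀
              fun ω hω => hω.1.le
        _ = c * μ.real D := by simp [mul_comm]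
    rw [hunion, setIntegral_union hdisj hD₀ (hZ.integrable T).integrableOn
      (hZ.integrable T).integrableOn, measureReal_union hdisj hD₀
      (measure_ne_top μ A) (measure_ne_top μ D), mul_add]
    exact add_le_add (ih fun s hs => hS s (by simp [hs])) hfirst

lemma mul_measure_biUnion_lt_sub_le_lintegral (hZ : Supermartingale Z ℱ μ) (c ε : ℝ)
    {S : Finset ι} (hS : ∀ t ∈ S, t ≤ T) :
    ENNReal.ofReal ε * μ (⋃ t ∈ S, {ω | Z t ω < c - ε}) ≤
      ∫⁻ ω, ENNReal.ofReal (c - Z T ω) ∂μ := by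
  set A : Set Ω := ⋃ t ∈ S, {ω | Z t ω < c - ε}
  have hint : Integrable (fun ω => c - Z T ω) (μ.restrict A) :=
    ((integrable_const c).sub (hZ.integrable T)).integrableOn
  have hreal : ε * μ.real A ≤ ∫ ω in A, c - Z T ω ∂μ := by
    rw [integral_sub (integrable_const c) (hZ.integrable T).integrableOn, setIntegral_const,
      smul_eq_mul]
    linarith [setIntegral_biUnion_lt_le hZ (c - ε) hS]
  calc ENNReal.ofReal ε * μ A
      = ENNReal.ofReal (ε * μ.real A) := by
        rw [ENNReal.ofReal_mul' measureReal_nonneg, ofReal_measureReal (measure_ne_top μ A)]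
    _ ≤ ENNReal.ofReal (∫ ω in A, c - Z T ω ∂μ) := ENNReal.ofReal_le_ofReal hreal
    _ ≤ ∫⁻ ω in A, ENNReal.ofReal (c - Z T ω) ∂μ := ofReal_integral_le_lintegral_ofReal hint
    _ ≤ ∫⁻ ω, ENNReal.ofReal (c - Z T ω) ∂μ := setLIntegral_le_lintegral _ _

variable [TopologicalSpace ι] [OrderTopology ι] [SecondCountableTopology ι]

lemma measure_exists_lt_sub_le_lintegral_div (hZ : Supermartingale Z ℱ μ)
    (hcont : ∀ᵐ ω ∂μ, ∀ t, ContinuousWithinAt (fun s => Z s ω) (Ici t) t) (hT : IsTop T)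
    (c : ℝ) {ε : ℝ} (hε : 0 < ε) :
    μ {ω | ∃ t, Z t ω < c - ε} ≤ (∫⁻ ω, ENNReal.ofReal (c - Z T ω) ∂μ) / ENNReal.ofReal ε := by
  obtain ⟨D, hD, hclosure⟩ := exists_countable_forall_mem_closure_inter_Ici ι
  calc μ {ω | ∃ t, Z t ω < c - ε}
      ≤ μ (⋃ t ∈ D, {ω | Z t ω < c - ε}) := by
        refine measure_mono_ae ?_
        filter_upwards [hcont] with ω hω ⟨t, ht⟩
        have hmem := ((hω t).mono inter_subset_right).mem_closure_image (hclosure t)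
        obtain ⟨_, hlt, s, hs, rfl⟩ := mem_closure_iff.mp hmem _ isOpen_Iio ht
        exact mem_biUnion hs.1 hlt
    _ ≤ (∫⁻ ω, ENNReal.ofReal (c - Z T ω) ∂μ) / ENNReal.ofReal ε := by
        refine measure_biUnion_le_of_forall_finset hD fun S _ => ?_
        rw [ENNReal.le_div_iff_mul_le (.inl (by simpa using hε)) (.inl ENNReal.ofReal_ne_top),
          mul_comm]
        exact mul_measure_biUnion_lt_sub_le_lintegral hZ c ε fun t _ => hT t

theorem supermartingale_inf_convergence_general {l : Filter κ} {𝒢 : κ → Filtration ι m0}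
    {X : κ → ι → Ω → ℝ} (hX : ∀ k, Supermartingale (X k) (𝒢 k) μ)
    (hcont : ∀ k, ∀ᵐ ω ∂μ, ∀ t, ContinuousWithinAt (fun s => X k s ω) (Ici t) t)
    (hT : IsTop T) {b c : ℝ} (hb : ∀ k, ∀ᵐ ω ∂μ, b ≤ X k T ω)
    (hlim : TendstoInMeasure μ (fun k => X k T) l fun _ => c) {ε : ℝ} (hε : 0 < ε) :
    Tendsto (fun k => μ {ω | ∃ t, X k t ω < c - ε}) l (𝓝 0) := by
  have hbound : Tendsto (fun k => (∫⁻ ω, ENNReal.ofReal (c - X k T ω) ∂μ) / ENNReal.ofReal ε) l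
      (𝓝 0) := by
    simpa using ENNReal.Tendsto.div_const
      (tendsto_lintegral_ofReal_sub_of_tendstoInMeasure hb hlim) (.inr (by simpa using hε))
  exact tendsto_of_tendsto_of_tendsto_of_le_of_le tendsto_const_nhds hbound (fun _ => zero_le)
    fun k => measure_exists_lt_sub_le_lintegral_div (hX k) (hcont k) hT c hε

end MaximalInequality

/-- The filtration `ℱ` indexed only by the times in `s`; it lets a process on `[0, T] ⊆ ℝ` be
treated as a process whose index type is the subtype of that interval. -/
def restrictTimes {ι : Type*} [Preorder ι] (ℱ : Filtration ι m0) (s : Set ι) :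
    Filtration s m0 where
  seq t := ℱ t
  mono' _ _ hst := ℱ.mono hst
  le' t := ℱ.le t

lemma SupermartingaleOn.supermartingale_restrictTimes {Q : Measure Ω} {ℱ : Filtration ℝ m0}
    {T : ℝ} {Z : ℝ → Ω → ℝ} (hZ : SupermartingaleOn Q ℱ T Z) :
    Supermartingale (fun t : Icc 0 T => Z t) (restrictTimes ℱ (Icc 0 T)) Q :=
  ⟨fun t => (hZ.1 t t.2).stronglyMeasurable,
    fun s t hst => hZ.2.2 s t s.2.1 hst t.2.2, fun t => hZ.2.1 t t.2⟩

lemma CadlagOn.continuousWithinAt_Ici {T : ℝ} {f : ℝ → ℝ} (hf : CadlagOn T f) (t : Icc 0 T) :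
    ContinuousWithinAt (fun s : Icc 0 T => f s) (Ici t) t := by
  rcases t.2.2.eq_or_lt with heq | hlt
  · have htop : IsTop t := fun s => s.2.2.trans_eq heq.symm
    rw [Ici_eq_singleton_iff_isTop.mpr htop]
    exact continuousWithinAt_singleton
  · exact (hf.1 t ⟨t.2.1, hlt⟩).comp continuous_subtype_val.continuousWithinAt fun s hs => hs

theorem supermartingale_inf_convergence
    {Ω : Type*} {m0 : MeasurableSpace Ω} (P : Measure Ω) [IsProbabilityMeasure P]
    (ℱ : Filtration ℝ m0) (T : ℝ) (hT : 0 < T)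
    (hF_rightCont : ∀ t : ℝ, ℱ t = ⨅ s ∈ Set.Ioi t, ℱ s)
    (hF_complete : ∀ (t : ℝ) (A : Set Ω), P A = 0 → MeasurableSet[ℱ t] A)
    (Z : ℕ → ℝ → Ω → ℝ)
    (hZ_proc : ∀ n, IsProcess P ℱ T (Z n))
    (hZ_sup : ∀ n, SupermartingaleOn P ℱ T (Z n))
    (hZ0 : ∀ n, ∀ᵐ ω ∂P, Z n 0 ω ≤ 1)
    (hZT : TendstoInMeasure P (fun n => Z n T) Filter.atTop (fun _ => (1:ℝ)))
    :
    ∀ ε : ℝ, 0 < ε →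
      Filter.Tendsto (fun n => P {ω | ∃ t ∈ Set.Icc (0:ℝ) T, Z n t ω < 1 - ε})
        Filter.atTop (nhds 0) := by
  intro ε hε
  simpa using supermartingale_inf_convergence_general (T := (⟨T, hT.le, le_rfl⟩ : Icc 0 T))
    (fun n => (hZ_sup n).supermartingale_restrictTimes)
    (fun n => (hZ_proc n).cadlag.mono fun ω hω => hω.continuousWithinAt_Ici)
    (fun t => t.2.2) (fun n => (hZ_proc n).nonneg.mono fun ω hω => hω T ⟨hT.le, le_rfl⟩) hZT hε

end WPS
end
end
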